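/- arXiv:1503.01748 — 2 statements merged into one kernel-verified Lean document; each statement's English description precedes it below -/
import Mathlib

section
/- Growth estimates in the upper half-plane (equations (26)–(27)): (i) There exists C > 0 such that for all λ ∈ ℂ with Im λ ≥ 0 and all x ∈ [0,T]: ‖Z₁(x,λ)‖ ≤ C e^{Im λ · (T − x)}. (ii) For every δ > 0 there exists C_δ > 0 such that for all λ with Im λ ≥ 0 whose distance from every zero of Δ₁ is at least δ (so that in particular Δ₁(λ) ≠ 0 and Φ(·,λ) is defined) and all x ∈ [0,T]: ‖Φ(x,λ)‖ ≤ C_δ e^{−Im λ · x}. -/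
open MeasureTheory Set Filter

noncomputable section

/-- A function `f : ℝ → ℂ` is absolutely continuous on `[0, T]`:
it is the indefinite integral of an integrable function. -/
def AbsContOn (f : ℝ → ℂ) (T : ℝ) : Prop :=
  ∃ g : ℝ → ℂ, IntervalIntegrable g volume 0 T ∧
    ∀ x ∈ Icc (0 : ℝ) T, f x = f 0 + ∫ t in (0 : ℝ)..x, g t

/-- `y : ℝ → ℂ × ℂ` is a solution of the Dirac system `B y' + Ω y = λ y` on `[0, T]`,
where `B = ![![0,1],![-1,0]]` and `Ω = ![![p,q],![q,-p]]`:  `y` is continuous on `[0,T]`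
and satisfies the equivalent system of integral equations coming from
`y₁' = q y₁ - (p + λ) y₂`, `y₂' = (λ - p) y₁ - q y₂`
(this encodes: `y` is absolutely continuous and the ODE holds a.e.). -/
def IsDiracSol (p q : ℝ → ℂ) (T : ℝ) (lam : ℂ) (y : ℝ → ℂ × ℂ) : Prop :=
  ContinuousOn y (Icc (0 : ℝ) T) ∧
    ∀ x ∈ Icc (0 : ℝ) T,
      ((y x).1 = (y 0).1 + ∫ t in (0 : ℝ)..x, (q t * (y t).1 - (p t + lam) * (y t).2)) ∧
      ((y x).2 = (y 0).2 + ∫ t in (0 : ℝ)..x, ((lam - p t) * (y t).1 - q t * (y t).2))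

/-- A nonlocal linear form `U(y) = ∫_{[0,T]} y₁ dμ₁ + ∫_{[0,T]} y₂ dμ₂`, where the complex
Borel measures `μᵢ` are encoded (via Radon–Nikodym) as integrable complex densities `wᵢ`
with respect to finite positive measures. -/
structure NonlocalForm (T : ℝ) where
  μ₁ : Measure ℝ
  μ₂ : Measure ℝ
  finite₁ : IsFiniteMeasure μ₁
  finite₂ : IsFiniteMeasure μ₂
  w₁ : ℝ → ℂ
  w₂ : ℝ → ℂ
  int₁ : Integrable w₁ μ₁
  int₂ : Integrable w₂ μ₂

namespace NonlocalForm

variable {T : ℝ}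

/-- The value `U(y)` of the nonlocal form on a function `y`. -/
def app (U : NonlocalForm T) (y : ℝ → ℂ × ℂ) : ℂ :=
  (∫ t in Icc (0 : ℝ) T, U.w₁ t * (y t).1 ∂U.μ₁) +
    ∫ t in Icc (0 : ℝ) T, U.w₂ t * (y t).2 ∂U.μ₂

/-- `h₁ = μ₁({0})`, the mass of the first complex measure at `0`. -/
def h₁ (U : NonlocalForm T) : ℂ := U.w₁ 0 * ((U.μ₁ {0}).toReal : ℂ)

/-- `h₂ = μ₂({0})`, the mass of the second complex measure at `0`. -/
def h₂ (U : NonlocalForm T) : ℂ := U.w₂ 0 * ((U.μ₂ {0}).toReal : ℂ)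

end NonlocalForm

/-- A two-point (local) linear form `y ↦ c₁ y₁(t) + c₂ y₂(t)`. -/
def locForm (c₁ c₂ : ℂ) (t : ℝ) (y : ℝ → ℂ × ℂ) : ℂ := c₁ * (y t).1 + c₂ * (y t).2

/-- `f` and `g` have the same order of zero at `z` (order possibly `0` or `∞`):
for every `n`, the first `n` derivatives of `f` vanish at `z` iff
the first `n` derivatives of `g` do. -/
def ZeroOrderEq (f g : ℂ → ℂ) (z : ℂ) : Prop :=
  ∀ n : ℕ, (∀ k < n, iteratedDeriv k f z = 0) ↔ (∀ k < n, iteratedDeriv k g z = 0)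

/-- The filter of `λ → ∞` within the sector `arg λ ∈ [δ, π - δ]`. -/
def sectorFilter (δ : ℝ) : Filter ℂ :=
  Filter.comap (fun lam : ℂ => ‖lam‖) Filter.atTop ⊓
    Filter.principal {lam : ℂ | Complex.arg lam ∈ Icc δ (Real.pi - δ)}

/-!
Let `Z` be the solution with `Z(T) = (0, 1)`. Then `Δ₁ = -U₁(Z)` and `Φ = Z / U₁(Z)`, so with the
energy estimate `‖Z(x)‖ ≤ C e^{|Im λ| (T - x)}` the bound on `Φ` reduces to
`|U₁(Z)| ≥ c e^{Im λ T}` away from the zeros.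

In the coordinates `u = y₁ - i y₂`, `v = y₁ + i y₂`, which diagonalize the rotation part of the
system, `e^{iλT} Z(0) → (i/2, 1/2)` as `Im λ → ∞`, while `‖e^{iλT} Z(x)‖ ≤ C e^{-Im λ x}`. Only
the atoms at `0` survive in the limit, so that `e^{iλT} U₁(Z) → (i/2) (h₁ - i h₂) ≠ 0`; this is
the lower bound for large `Im λ`. In the remaining horizontal strip, `Δ₁` is bounded and has no
zero in the disc of radius `δ` about `λ`. If it were very small at `λ`, then by Harnack's
inequality it would be small on a circle about `λ`, and by the three circles theorem also at a
point of a fixed distance above `λ`, where it is known to be large.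
-/

section ZeroFree

open Metric

variable {f : ℂ → ℂ} {c : ℂ} {R A : ℝ}

lemma exists_differentiableOn_log_ball (hf : DifferentiableOn ℂ f (ball c R))
    (hne : ∀ z ∈ ball c R, f z ≠ 0) :
    ∃ g : ℂ → ℂ, g c = 0 ∧ DifferentiableOn ℂ g (ball c R) ∧
      ∀ z ∈ ball c R, f z = f c * Complex.exp (g z) := by
  obtain ⟨g, hgc, hg⟩ :=
    ((hf.deriv isOpen_ball).div hf hne).isExactOn_ball.with_val_at c 0
  refine ⟨g, hgc, fun z hz => (hg z hz).differentiableAt.differentiableWithinAt, fun z hz => ?_⟩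
  have hderiv : ∀ w ∈ ball c R, HasDerivAt (fun x => f x * Complex.exp (-g x)) 0 w := by
    intro w hw
    have hfw := ((hf w hw).differentiableAt (isOpen_ball.mem_nhds hw)).hasDerivAt
    refine (hfw.mul (hg w hw).neg.cexp).congr_deriv ?_
    have hfw_ne := hne w hw
    simp only [Pi.div_apply]
    field_simp
    ring
  have hconst := isOpen_ball.is_const_of_deriv_eq_zero (convex_ball c R).isPreconnected
    (fun w hw => (hderiv w hw).differentiableAt.differentiableWithinAt)
    (fun w hw => (hderiv w hw).deriv) hz (mem_ball_self (nonempty_ball.1 ⟨z, hz⟩))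
  rw [hgc, neg_zero, Complex.exp_zero, mul_one, Complex.exp_neg] at hconst
  rw [← hconst, mul_assoc, inv_mul_cancel₀ (Complex.exp_ne_zero _), mul_one]

/-- Harnack-type estimate, from the Borel–Carathéodory theorem applied to `log (f / f c)`. -/
lemma norm_le_mul_rpow_of_ne_zero (hf : DifferentiableOn ℂ f (ball c R))
    (hA : ∀ z ∈ ball c R, ‖f z‖ ≤ A) (hne : ∀ z ∈ ball c R, f z ≠ 0) {z : ℂ}
    (hz : z ∈ ball c R) :
    ‖f z‖ ≤ ‖f c‖ * (A / ‖f c‖) ^ (2 * dist z c / (R - dist z c)) := by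
  have hR : 0 < R := nonempty_ball.1 ⟨z, hz⟩
  have hfc : 0 < ‖f c‖ := norm_pos_iff.2 (hne c (mem_ball_self hR))
  obtain hAfc | hAfc := (hA c (mem_ball_self hR)).eq_or_lt
  · simpa [← hAfc, hfc.ne'] using hAfc ▸ hA z hz
  obtain ⟨g, hgc, hg, hfg⟩ := exists_differentiableOn_log_ball hf hne
  set M := Real.log (A / ‖f c‖) with hM
  have hre : ∀ w ∈ ball c R, (g w).re ≤ M := fun w hw => by
    rw [hM, Real.le_log_iff_exp_le (div_pos (hfc.trans hAfc) hfc), le_div_iff₀ hfc, mul_comm,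
      ← Complex.norm_exp, ← norm_mul, ← hfg w hw]
    exact hA w hw
  have hmaps : MapsTo (c + ·) (ball 0 R) (ball c R) := fun w hw => by simpa using hw
  have hBC := Complex.borelCaratheodory_zero (z := z - c) (f := fun w => g (c + w))
    (Real.log_pos ((one_lt_div hfc).2 hAfc)) (hg.comp (by fun_prop) hmaps)
    (fun w hw => hre _ (hmaps hw)) hR (by simpa [← dist_eq_norm] using hz) (by simpa using hgc)
  rw [← dist_eq_norm, add_sub_cancel] at hBC
  calc ‖f z‖ = ‖f c‖ * Real.exp (g z).re := by rw [hfg z hz, norm_mul, Complex.norm_exp]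
    _ ≤ ‖f c‖ * Real.exp (M * (2 * dist z c / (R - dist z c))) := by
      gcongr
      exact ((Complex.re_le_norm _).trans hBC).trans_eq (by ring)
    _ = _ := by rw [Real.rpow_def_of_pos (div_pos (hfc.trans hAfc) hfc)]

lemma norm_le_sqrt_of_ne_zero (hR : 0 < R) (hf : DifferentiableOn ℂ f (ball c R))
    (hA : ∀ z ∈ ball c R, ‖f z‖ ≤ A) (hne : ∀ z ∈ ball c R, f z ≠ 0) {z : ℂ}
    (hz : z ∈ sphere c (R / 5)) : ‖f z‖ ≤ √(A * ‖f c‖) := by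
  have hexp : 2 * (R / 5) / (R - R / 5) = 1 / 2 := by field_simp; norm_num
  calc ‖f z‖ ≤ ‖f c‖ * (A / ‖f c‖) ^ (2 * dist z c / (R - dist z c)) :=
        norm_le_mul_rpow_of_ne_zero hf hA hne (by rw [mem_ball, mem_sphere.1 hz]; linarith)
    _ = √(A * ‖f c‖) := by
      have hA₀ : 0 ≤ A := (norm_nonneg _).trans (hA c (mem_ball_self hR))
      rw [mem_sphere.1 hz, hexp, ← Real.sqrt_eq_rpow, Real.sqrt_div hA₀, Real.sqrt_mul hA₀,
        mul_div_left_comm, Real.div_sqrt]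

/-- Hadamard's three circles theorem, as the three lines theorem for `w ↦ f (c + exp w)`. -/
lemma norm_le_interp_of_mem_annulus {E : Type*} [NormedAddCommGroup E] [NormedSpace ℂ E]
    {f : ℂ → E} {r a b : ℝ} (hr : 0 < r) (hrR : r < R)
    (hf : DifferentiableOn ℂ f (closedBall c R \ ball c r))
    (ha : ∀ z ∈ sphere c r, ‖f z‖ ≤ a) (hb : ∀ z ∈ sphere c R, ‖f z‖ ≤ b)
    {z : ℂ} (hz : z ∈ closedBall c R \ ball c r) :
    ‖f z‖ ≤ a ^ (1 - (Real.log (dist z c) - Real.log r) / (Real.log R - Real.log r)) *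
      b ^ ((Real.log (dist z c) - Real.log r) / (Real.log R - Real.log r)) := by
  have hdist : ∀ w : ℂ, dist (c + Complex.exp w) c = Real.exp w.re := fun w => by
    simp [dist_eq_norm, Complex.norm_exp]
  have hmaps : MapsTo (fun w => c + Complex.exp w) (Complex.re ⁻¹' Icc (Real.log r) (Real.log R))
      (closedBall c R \ ball c r) := fun w hw => by
    simpa [hdist, ← Real.le_log_iff_exp_le (hr.trans hrR), ← Real.log_le_iff_le_exp hr]
      using hw.symm
  have hcompact : IsCompact (closedBall c R \ ball c r) :=
    (isCompact_closedBall c R).diff isOpen_ball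
  have hzr : r ≤ dist z c := by simpa using hz.2
  have hzc : z - c ≠ 0 := norm_pos_iff.1 (dist_eq_norm z c ▸ hr.trans_le hzr)
  have hre : (Complex.log (z - c)).re = Real.log (dist z c) := by
    rw [Complex.log_re, dist_eq_norm]
  have hlines := Complex.HadamardThreeLines.norm_le_interp_of_mem_verticalClosedStrip'
    (f := fun w => f (c + Complex.exp w)) (z := Complex.log (z - c)) (a := a) (b := b)
    (Real.log_lt_log hr hrR) ?_ ?_ ?_ ?_ ?_
  · simpa only [hre, Complex.exp_log hzc, add_sub_cancel] using hlines
  · exact ⟨hre ▸ Real.log_le_log hr hzr, hre ▸ Real.log_le_log (hr.trans_le hzr) hz.1⟩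
  · refine DifferentiableOn.diffContOnCl (hf.comp (by fun_prop) ?_)
    rwa [Complex.HadamardThreeLines.verticalStrip, Complex.closure_preimage_re,
      closure_Ioo (Real.log_lt_log hr hrR).ne]
  · exact (hcompact.bddAbove_image hf.continuousOn.norm).mono (by
      rintro _ ⟨w, hw, rfl⟩
      exact mem_image_of_mem _ (hmaps hw))
  · intro w (hw : w.re = _)
    exact ha _ (by rw [mem_sphere, hdist, hw, Real.exp_log hr])
  · intro w (hw : w.re = _)
    exact hb _ (by rw [mem_sphere, hdist, hw, Real.exp_log (hr.trans hrR)])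

lemma exists_pos_le_norm_center {δ ρ m : ℝ} (hδ : 0 < δ) (hδρ : δ < ρ) (hρR : ρ < R)
    (hA : 0 < A) (hm : 0 < m) :
    ∃ m' > 0, ∀ (f : ℂ → ℂ) (c w : ℂ), DifferentiableOn ℂ f (closedBall c R) →
      (∀ z ∈ closedBall c R, ‖f z‖ ≤ A) → (∀ z ∈ ball c δ, f z ≠ 0) →
      dist w c = ρ → m ≤ ‖f w‖ → m' ≤ ‖f c‖ := by
  set r := δ / 5 with hr
  set θ := (Real.log ρ - Real.log r) / (Real.log R - Real.log r) with hθ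
  have hθ1 : 0 < 1 - θ := by
    have hlog₁ : Real.log r < Real.log ρ := Real.log_lt_log (by positivity) (by linarith)
    have hlog₂ : Real.log ρ < Real.log R := Real.log_lt_log (by linarith) hρR
    rw [hθ, sub_pos, div_lt_one (by linarith)]
    linarith
  refine ⟨((m / A ^ θ) ^ (1 - θ)⁻¹) ^ 2 / A, by positivity, fun f c w hf hfA hne hw hmw => ?_⟩
  have hball : ball c δ ⊆ closedBall c R :=
    ball_subset_closedBall.trans (closedBall_subset_closedBall (by linarith))
  have hfc : 0 < ‖f c‖ := norm_pos_iff.2 (hne c (mem_ball_self hδ))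
  have hsmall : ∀ z ∈ sphere c r, ‖f z‖ ≤ √(A * ‖f c‖) := fun z hz =>
    norm_le_sqrt_of_ne_zero hδ (hf.mono hball) (fun x hx => hfA x (hball hx)) hne hz
  have hinterp : m ≤ √(A * ‖f c‖) ^ (1 - θ) * A ^ θ := by
    have hthree := norm_le_interp_of_mem_annulus (z := w) (by positivity) (by linarith)
      (hf.mono sdiff_subset) hsmall (fun z hz => hfA z (sphere_subset_closedBall hz))
      (by rw [Set.mem_sdiff, mem_closedBall, mem_ball, hw]; constructor <;> linarith)
    rw [hw] at hthree
    exact hmw.trans hthree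
  have hsqrt : (m / A ^ θ) ^ (1 - θ)⁻¹ ≤ √(A * ‖f c‖) :=
    (Real.rpow_inv_le_iff_of_pos (by positivity) (by positivity) hθ1).2
      ((div_le_iff₀ (by positivity)).2 hinterp)
  rw [div_le_iff₀' hA]
  exact (Real.le_sqrt (by positivity) (by positivity)).1 hsqrt

lemma exists_pos_le_norm_of_dist_zeros {f : ℂ → ℂ} (hf : Differentiable ℂ f)
    (hbdd : ∀ S : ℝ, ∃ A : ℝ, ∀ z : ℂ, |z.im| ≤ S → ‖f z‖ ≤ A) {K m δ : ℝ} (hm : 0 < m)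
    (hlow : ∀ z : ℂ, K ≤ z.im → m ≤ ‖f z‖) (hδ : 0 < δ) :
    ∃ m' > 0, ∀ z : ℂ, 0 ≤ z.im → z.im ≤ K → (∀ w, f w = 0 → δ ≤ dist z w) → m' ≤ ‖f z‖ := by
  set ρ := |K| + 2 * δ
  have hρ_pos : 0 < ρ := by positivity
  obtain ⟨A, hA⟩ := hbdd (K + 2 * ρ)
  obtain ⟨m', hm', hcenter⟩ := exists_pos_le_norm_center (R := 2 * ρ) (A := |A| + 1) hδ
    (by linarith [abs_nonneg K] : δ < ρ) (by linarith) (by positivity) hm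
  refine ⟨m', hm', fun z hz₀ hzK hz => ?_⟩
  refine hcenter f z (z + ρ * Complex.I) hf.differentiableOn (fun w hw => ?_) (fun w hw hfw => ?_)
    (by simp [dist_eq_norm, abs_of_pos hρ_pos]) (hlow _ ?_)
  · have him : |w.im - z.im| ≤ 2 * ρ :=
      (Complex.abs_im_le_norm (w - z)).trans (by simpa [dist_eq_norm] using hw)
    refine (hA w ?_).trans (by linarith [le_abs_self A])
    calc |w.im| ≤ |w.im - z.im| + |z.im| := by linarith [abs_sub_abs_le_abs_sub w.im z.im]
      _ ≤ K + 2 * ρ := by rw [abs_of_nonneg hz₀]; linarith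
  · exact (hz w hfw).not_gt (dist_comm w z ▸ hw)
  · simpa using by linarith [le_abs_self K]

end ZeroFree

section Calculus

variable {a b x : ℝ}

lemma hasDerivWithinAt_Ici_of_Icc {F : Type*} [NormedAddCommGroup F] [NormedSpace ℝ F]
    {f : ℝ → F} {f' : F} (hf : HasDerivWithinAt f f' (Icc a b) x)
    (hx : x ∈ Ico a b) : HasDerivWithinAt f f' (Ici x) x :=
  hf.mono_of_mem_nhdsWithin
    (mem_of_superset (Icc_mem_nhdsGE hx.2) (Icc_subset_Icc_left hx.1))

lemma hasDerivWithinAt_of_eq_add_integral {F : Type*} [NormedAddCommGroup F] [NormedSpace ℝ F]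
    [CompleteSpace F] {f g : ℝ → F} (hg : ContinuousOn g (Icc a b))
    (hf : ∀ x ∈ Icc a b, f x = f a + ∫ t in a..x, g t) (hx : x ∈ Icc a b) :
    HasDerivWithinAt f (g x) (Icc a b) x := by
  have hxg : ContinuousOn g (uIcc a x) :=
    hg.mono (uIcc_of_le hx.1 ▸ Icc_subset_Icc_right hx.2)
  have : Fact (x ∈ Icc a b) := ⟨hx⟩
  have hint : HasDerivWithinAt (fun u => ∫ t in a..u, g t) (g x) (Icc a b) x :=
    intervalIntegral.integral_hasDerivWithinAt_right hxg.intervalIntegrable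
      (hg.stronglyMeasurableAtFilter_nhdsWithin measurableSet_Icc x) (hg x hx)
  exact (hint.const_add (f a)).congr hf (hf x hx)

lemma le_mul_exp_of_neg_mul_le_hasDerivWithinAt {f f' : ℝ → ℝ} {k : ℝ}
    (hf : ∀ t ∈ Icc a b, HasDerivWithinAt f (f' t) (Icc a b) t)
    (hf' : ∀ t ∈ Icc a b, -(k * f t) ≤ f' t) (hx : x ∈ Icc a b) :
    f x ≤ f b * Real.exp (k * (b - x)) := by
  have hderiv : ∀ t ∈ Icc a b, HasDerivWithinAt (fun s => f s * Real.exp (k * s))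
      ((f' t + k * f t) * Real.exp (k * t)) (Icc a b) t := fun t ht => by
    refine ((hf t ht).mul
      ((hasDerivAt_id t).const_mul k).exp.hasDerivWithinAt).congr_deriv ?_
    simp only [id_eq]
    ring
  have hmono : MonotoneOn (fun s => f s * Real.exp (k * s)) (Icc a b) :=
    monotoneOn_of_hasDerivWithinAt_nonneg (convex_Icc a b)
      (fun t ht => (hderiv t ht).continuousWithinAt)
      (fun t ht => (hderiv t (interior_subset ht)).mono interior_subset)
      (fun t ht => mul_nonneg (by linarith [hf' t (interior_subset ht)]) (Real.exp_pos _).le)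
  have hxb := hmono hx (right_mem_Icc.2 (hx.1.trans hx.2)) hx.2
  rw [mul_sub, Real.exp_sub, ← mul_div_assoc, le_div_iff₀ (Real.exp_pos _)]
  exact hxb

lemma norm_sub_le_of_norm_hasDerivWithinAt_le {E : Type*} [NormedAddCommGroup E]
    [NormedSpace ℝ E] {f f' : ℝ → E} {B B' : ℝ → ℝ} (hab : a ≤ b)
    (hf : ∀ t ∈ Icc a b, HasDerivWithinAt f (f' t) (Icc a b) t)
    (hB : ∀ t, HasDerivAt B (B' t) t) (hf' : ∀ t ∈ Icc a b, ‖f' t‖ ≤ B' t) :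
    ‖f b - f a‖ ≤ B b - B a :=
  image_norm_le_of_norm_deriv_right_le_deriv_boundary
    (fun t ht => ((hf t ht).sub_const (f a)).continuousWithinAt)
    (fun t ht =>
      hasDerivWithinAt_Ici_of_Icc ((hf t (Ico_subset_Icc_self ht)).sub_const (f a)) ht)
    (by simp) (fun t => (hB t).sub_const (B a)) (fun t ht => hf' t (Ico_subset_Icc_self ht))
    (right_mem_Icc.2 hab)

lemma hasDerivWithinAt_exp_mul {w : ℝ → ℂ} {w' : ℂ} (hw : HasDerivWithinAt w w' (Icc a b) x)
    (c : ℂ) : HasDerivWithinAt (fun t : ℝ => Complex.exp (c * (b - t)) * w t)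
      (Complex.exp (c * (b - x)) * (w' - c * w x)) (Icc a b) x := by
  have hexp : HasDerivAt (fun t : ℝ => Complex.exp (c * (b - t)))
      (Complex.exp (c * (b - x)) * (c * -1)) x :=
    (((hasDerivAt_id x).ofReal_comp.const_sub (b : ℂ)).const_mul c).cexp
  exact (hexp.hasDerivWithinAt.mul hw).congr_deriv (by ring)

lemma norm_le_of_hasDerivWithinAt_mul_add {f g : ℝ → ℂ} {z : ℂ} {B : ℝ} (hz : 0 < z.re)
    (hf : ∀ t ∈ Icc a b, HasDerivWithinAt f (z * f t + g t) (Icc a b) t)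
    (hg : ∀ t ∈ Icc a b, ‖g t‖ ≤ B) (hx : x ∈ Icc a b) :
    ‖f x‖ ≤ Real.exp (-(z.re * (b - x))) * ‖f b‖ + B / z.re := by
  have hnorm : ∀ t : ℝ, ‖Complex.exp (z * (b - t))‖ = Real.exp (z.re * (b - t)) := fun t => by
    rw [Complex.norm_exp, ← Complex.ofReal_sub, Complex.re_mul_ofReal]
  have hsub : Icc x b ⊆ Icc a b := Icc_subset_Icc_left hx.1
  have hB : ∀ t, HasDerivAt (fun s => -(B / z.re * Real.exp (z.re * (b - s))))
      (Real.exp (z.re * (b - t)) * B) t := fun t => by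
    have hexp := (((hasDerivAt_id t).const_sub b).const_mul z.re).exp
    refine (hexp.const_mul (B / z.re)).neg.congr_deriv ?_
    simp only [id_eq]
    field_simp
  have hle := norm_sub_le_of_norm_hasDerivWithinAt_le hx.2
    (fun t ht => hasDerivWithinAt_exp_mul ((hf t (hsub ht)).mono hsub) z) hB fun t ht => by
      rw [add_sub_cancel_left, norm_mul, hnorm]
      gcongr
      exact hg t (hsub ht)
  have hfx : Real.exp (z.re * (b - x)) * ‖f x‖ ≤ ‖f b‖ + B / z.re * Real.exp (z.re * (b - x)) := by
    have hB₀ : 0 ≤ B := (norm_nonneg _).trans (hg x hx)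
    have htri := norm_sub_norm_le (Complex.exp (z * (b - x)) * f x) (f b)
    rw [norm_sub_rev, norm_mul, hnorm] at htri
    simp only [sub_self, mul_zero, Complex.exp_zero, one_mul, Real.exp_zero, mul_one] at hle
    linarith [div_nonneg hB₀ hz.le]
  rw [Real.exp_neg, inv_mul_eq_div, ← sub_le_iff_le_add, le_div_iff₀ (Real.exp_pos _)]
  linarith

end Calculus

section LinearPencil

open scoped Topology

lemma differentiableAt_of_norm_slope_sub_le {𝕜 F : Type*} [NontriviallyNormedField 𝕜]
    [NormedAddCommGroup F] [NormedSpace 𝕜 F] [CompleteSpace F] {f : 𝕜 → F} {x : 𝕜} {C : ℝ}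
    (h : ∀ᶠ μν in 𝓝[≠] x ×ˢ 𝓝[≠] x,
      ‖slope f x μν.1 - slope f x μν.2‖ ≤ C * (‖μν.1 - x‖ + ‖μν.2 - x‖)) :
    DifferentiableAt 𝕜 f x := by
  have hlim : Tendsto (fun μν : 𝕜 × 𝕜 => C * (‖μν.1 - x‖ + ‖μν.2 - x‖))
      (𝓝[≠] x ×ˢ 𝓝[≠] x) (𝓝 0) := by
    have hx : Tendsto (fun μ => ‖μ - x‖) (𝓝[≠] x) (𝓝 0) :=
      tendsto_nhdsWithin_of_tendsto_nhds (tendsto_iff_norm_sub_tendsto_zero.1 tendsto_id)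
    simpa using ((hx.comp tendsto_fst).add (hx.comp tendsto_snd)).const_mul C
  have hcauchy : Cauchy (map (slope f x) (𝓝[≠] x)) := by
    refine cauchy_map_iff.2 ⟨inferInstance, tendsto_uniformity_iff_dist_tendsto_zero.2 ?_⟩
    simp only [dist_eq_norm]
    exact squeeze_zero' (Eventually.of_forall fun _ => norm_nonneg _) h hlim
  obtain ⟨f', hf'⟩ := cauchy_map_iff_exists_tendsto.1 hcauchy
  exact (hasDerivAt_iff_tendsto_slope.2 hf').differentiableAt

lemma norm_le_mul_of_norm_deriv_le_of_eq_zero {E : Type*} [NormedAddCommGroup E]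
    [NormedSpace ℝ E] {a b K ε : ℝ} {w w' : ℝ → E}
    (hw : ∀ t ∈ Icc a b, HasDerivWithinAt w (w' t) (Icc a b) t) (hwa : w a = 0) (hK : 0 ≤ K)
    (hε : 0 ≤ ε) (hw' : ∀ t ∈ Icc a b, ‖w' t‖ ≤ K * ‖w t‖ + ε) {t : ℝ} (ht : t ∈ Icc a b) :
    ‖w t‖ ≤ gronwallBound 0 K 1 (b - a) * ε := by
  have hgronwall := norm_le_gronwallBound_of_norm_deriv_right_le (δ := 0)
    (fun s hs => (hw s hs).continuousWithinAt)
    (fun s hs => hasDerivWithinAt_Ici_of_Icc (hw s (Ico_subset_Icc_self hs)) hs)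
    (by rw [hwa, norm_zero]) (fun s hs => hw' s (Ico_subset_Icc_self hs)) t ht
  have hscale : gronwallBound 0 K ε (b - a) = gronwallBound 0 K 1 (b - a) * ε := by
    unfold gronwallBound
    split_ifs <;> ring
  exact (hgronwall.trans (gronwallBound_mono le_rfl hε hK (sub_le_sub_right ht.2 a))).trans_eq
    hscale

variable {E : Type*} [NormedAddCommGroup E] [NormedSpace ℂ E] {A : ℝ → E →L[ℂ] E} {J : E →L[ℂ] E}
  {a b M : ℝ} {y : ℂ → ℝ → E} {c : E}

lemma norm_le_of_hasDerivWithinAt_pencil_add {lam : ℂ} {N ε : ℝ} {w g : ℝ → E}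
    (hA : ∀ t ∈ Icc a b, ‖A t‖ ≤ M) (hN : ‖lam‖ ≤ N)
    (hw : ∀ t ∈ Icc a b, HasDerivWithinAt w (A t (w t) + lam • J (w t) + g t) (Icc a b) t)
    (hwa : w a = 0) (hg : ∀ t ∈ Icc a b, ‖g t‖ ≤ ε) {t : ℝ} (ht : t ∈ Icc a b) :
    ‖w t‖ ≤ gronwallBound 0 (M + N * ‖J‖) 1 (b - a) * ε := by
  have hM : 0 ≤ M := (norm_nonneg _).trans (hA t ht)
  have hN₀ : 0 ≤ N := (norm_nonneg _).trans hN
  refine norm_le_mul_of_norm_deriv_le_of_eq_zero hw hwa (by positivity)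
    ((norm_nonneg _).trans (hg t ht)) (fun s hs => ?_) ht
  calc ‖A s (w s) + lam • J (w s) + g s‖
      ≤ ‖A s (w s)‖ + ‖lam • J (w s)‖ + ‖g s‖ := norm_add₃_le
    _ ≤ M * ‖w s‖ + N * (‖J‖ * ‖w s‖) + ε := by
        rw [norm_smul]
        gcongr
        exacts [(A s).le_of_opNorm_le (hA s hs) _, J.le_opNorm _, hg s hs]
    _ = (M + N * ‖J‖) * ‖w s‖ + ε := by ring

lemma exists_norm_sub_le_of_isIntegralCurveOn_pencil (hA : ∀ t ∈ Icc a b, ‖A t‖ ≤ M)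
    (hy : ∀ lam, IsIntegralCurveOn (y lam) (fun t v => A t v + lam • J v) (Icc a b))
    (hya : ∀ lam, y lam a = c) (lam : ℂ) :
    ∃ C, ∀ μ, ‖μ - lam‖ ≤ 1 → ∀ t ∈ Icc a b, ‖y μ t - y lam t‖ ≤ C * ‖μ - lam‖ := by
  obtain ⟨B, hB⟩ := isCompact_Icc.exists_bound_of_continuousOn (hy lam).continuousOn
  refine ⟨gronwallBound 0 (M + (‖lam‖ + 1) * ‖J‖) 1 (b - a) * (‖J‖ * B), fun μ hμ t ht => ?_⟩
  have hμ' : ‖μ‖ ≤ ‖lam‖ + 1 := by linarith [norm_le_norm_add_norm_sub' μ lam]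
  rw [mul_assoc]
  refine norm_le_of_hasDerivWithinAt_pencil_add (w := fun s => y μ s - y lam s) (lam := μ)
    (g := fun s => (μ - lam) • J (y lam s)) hA hμ' (fun s hs => ?_) (by simp [hya])
    (fun s hs => ?_) ht
  · refine ((hy μ s hs).sub (hy lam s hs)).congr_deriv ?_
    simp only [map_sub, smul_sub, sub_smul]
    abel
  · rw [norm_smul, mul_comm]
    gcongr
    exact J.le_opNorm_of_le (hB s hs)

lemma hasDerivWithinAt_slope_of_isIntegralCurveOn_pencil
    (hy : ∀ lam, IsIntegralCurveOn (y lam) (fun t v => A t v + lam • J v) (Icc a b))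
    {lam μ : ℂ} (hμ : μ ≠ lam) {t : ℝ} (ht : t ∈ Icc a b) :
    HasDerivWithinAt (fun s => slope (fun ν => y ν s) lam μ)
      (A t (slope (fun ν => y ν t) lam μ) + lam • J (slope (fun ν => y ν t) lam μ) + J (y μ t))
      (Icc a b) t := by
  simp only [slope_def_module]
  refine (((hy μ t ht).sub (hy lam t ht)).const_smul ((μ - lam)⁻¹)).congr_deriv ?_
  have hJ : J (y μ t) = (μ - lam)⁻¹ • (μ - lam) • J (y μ t) :=
    (inv_smul_smul₀ (sub_ne_zero.2 hμ) _).symm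
  rw [hJ]
  simp only [map_sub, map_smul, smul_sub, smul_add, sub_smul, smul_comm lam (μ - lam)⁻¹]
  abel

lemma exists_norm_slope_sub_slope_le_of_isIntegralCurveOn_pencil
    (hA : ∀ t ∈ Icc a b, ‖A t‖ ≤ M)
    (hy : ∀ lam, IsIntegralCurveOn (y lam) (fun t v => A t v + lam • J v) (Icc a b))
    (hya : ∀ lam, y lam a = c) (lam : ℂ) :
    ∃ C ≥ 0, ∀ μ ≠ lam, ∀ ν ≠ lam, ‖μ - lam‖ ≤ 1 → ‖ν - lam‖ ≤ 1 → ∀ t ∈ Icc a b,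
      ‖slope (fun ξ => y ξ t) lam μ - slope (fun ξ => y ξ t) lam ν‖ ≤
        C * (‖μ - lam‖ + ‖ν - lam‖) := by
  obtain ⟨L, hL⟩ := exists_norm_sub_le_of_isIntegralCurveOn_pencil hA hy hya lam
  refine ⟨_, le_max_right (gronwallBound 0 (M + ‖lam‖ * ‖J‖) 1 (b - a) * (‖J‖ * L)) 0,
    fun μ hμ ν hν hμ₁ hν₁ t ht => ?_⟩
  refine LE.le.trans ?_ (mul_le_mul_of_nonneg_right (le_max_left _ _) (by positivity))
  have hyμν : ∀ s ∈ Icc a b, ‖y μ s - y ν s‖ ≤ L * (‖μ - lam‖ + ‖ν - lam‖) := fun s hs => by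
    rw [mul_add]
    exact (norm_sub_le_norm_sub_add_norm_sub _ (y lam s) _).trans
      (add_le_add (hL μ hμ₁ s hs) (norm_sub_rev (y ν s) _ ▸ hL ν hν₁ s hs))
  rw [mul_assoc, mul_assoc]
  refine norm_le_of_hasDerivWithinAt_pencil_add (lam := lam) (g := fun s => J (y μ s - y ν s))
    (w := fun s => slope (fun ξ => y ξ s) lam μ - slope (fun ξ => y ξ s) lam ν)
    hA le_rfl (fun s hs => ?_) (by simp [slope_def_module, hya])
    (fun s hs => J.le_opNorm_of_le (hyμν s hs)) ht
  refine ((hasDerivWithinAt_slope_of_isIntegralCurveOn_pencil hy hμ hs).sub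
    (hasDerivWithinAt_slope_of_isIntegralCurveOn_pencil hy hν hs)).congr_deriv ?_
  simp only [map_sub, smul_sub]
  abel

theorem differentiable_of_isIntegralCurveOn_pencil [CompleteSpace E]
    (hA : ∀ t ∈ Icc a b, ‖A t‖ ≤ M)
    (hy : ∀ lam, IsIntegralCurveOn (y lam) (fun t v => A t v + lam • J v) (Icc a b))
    (hya : ∀ lam, y lam a = c) {Y : ℂ → C(Icc a b, E)} (hY : ∀ lam t, Y lam t = y lam t) :
    Differentiable ℂ Y := by
  intro lam
  obtain ⟨C, hC, hslope⟩ :=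
    exists_norm_slope_sub_slope_le_of_isIntegralCurveOn_pencil hA hy hya lam
  refine differentiableAt_of_norm_slope_sub_le (C := C) ?_
  have hnear : ∀ᶠ μ in 𝓝[≠] lam, μ ≠ lam ∧ ‖μ - lam‖ ≤ 1 := by
    filter_upwards [self_mem_nhdsWithin,
      nhdsWithin_le_nhds (Metric.closedBall_mem_nhds lam one_pos)] with μ hμ hμ₁
    exact ⟨hμ, by rwa [← dist_eq_norm]⟩
  filter_upwards [hnear.prod_mk hnear] with ⟨μ, ν⟩ ⟨⟨hμ, hμ₁⟩, hν, hν₁⟩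
  refine (ContinuousMap.norm_le _ (by positivity)).2 fun t => ?_
  simpa [slope_def_module, hY] using hslope μ hμ ν hν hμ₁ hν₁ t t.2

end LinearPencil

section DiracSystem

lemma AbsContOn.continuousOn {f : ℝ → ℂ} {T : ℝ} (hT : 0 ≤ T) (hf : AbsContOn f T) :
    ContinuousOn f (Icc 0 T) := by
  obtain ⟨g, hg, hfg⟩ := hf
  have hprim : ContinuousOn (fun x => ∫ t in (0 : ℝ)..x, g t) (Icc 0 T) := by
    simpa only [uIcc_of_le hT] using
      intervalIntegral.continuousOn_primitive_interval' hg left_mem_uIcc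
  exact (continuousOn_const.add hprim).congr hfg

/-- The matrix `!![q, -p; -p, -q]` of the Dirac system in normal form
`y' = !![q, -p; -p, -q] y + λ !![0, -1; 1, 0] y`. -/
def diracPotential (p q : ℂ) : ℂ × ℂ →L[ℂ] ℂ × ℂ :=
  (q • ContinuousLinearMap.fst ℂ ℂ ℂ - p • ContinuousLinearMap.snd ℂ ℂ ℂ).prod
    (-(p • ContinuousLinearMap.fst ℂ ℂ ℂ) - q • ContinuousLinearMap.snd ℂ ℂ ℂ)

/-- The matrix `!![0, -1; 1, 0]` multiplying the spectral parameter in the Dirac system in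
normal form. -/
def diracRotation : ℂ × ℂ →L[ℂ] ℂ × ℂ :=
  (-ContinuousLinearMap.snd ℂ ℂ ℂ).prod (ContinuousLinearMap.fst ℂ ℂ ℂ)

/-- The time-dependent vector field of the Dirac system in normal form; its integral curves on
`[0, T]` are the classical solutions. -/
def diracField (p q : ℝ → ℂ) (lam : ℂ) (t : ℝ) (v : ℂ × ℂ) : ℂ × ℂ :=
  diracPotential (p t) (q t) v + lam • diracRotation v

lemma diracField_apply (p q : ℝ → ℂ) (lam : ℂ) (t : ℝ) (v : ℂ × ℂ) :
    diracField p q lam t v =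
      (q t * v.1 - (p t + lam) * v.2, (lam - p t) * v.1 - q t * v.2) := by
  ext <;> simp [diracField, diracPotential, diracRotation] <;> ring

lemma norm_diracPotential_le (p q : ℂ) : ‖diracPotential p q‖ ≤ ‖p‖ + ‖q‖ := by
  refine ContinuousLinearMap.opNorm_le_bound _ (by positivity) fun v => ?_
  refine max_le ?_ ?_
  · calc ‖q * v.1 - p * v.2‖ ≤ ‖q‖ * ‖v.1‖ + ‖p‖ * ‖v.2‖ := by
          simpa using norm_sub_le (q * v.1) (p * v.2)
      _ ≤ ‖q‖ * ‖v‖ + ‖p‖ * ‖v‖ := by gcongr; exacts [norm_fst_le v, norm_snd_le v]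
      _ = (‖p‖ + ‖q‖) * ‖v‖ := by ring
  · calc ‖-(p * v.1) - q * v.2‖ ≤ ‖p‖ * ‖v.1‖ + ‖q‖ * ‖v.2‖ := by
          simpa using norm_sub_le (-(p * v.1)) (q * v.2)
      _ ≤ ‖p‖ * ‖v‖ + ‖q‖ * ‖v‖ := by gcongr; exacts [norm_fst_le v, norm_snd_le v]
      _ = (‖p‖ + ‖q‖) * ‖v‖ := by ring

variable {p q : ℝ → ℂ} {lam : ℂ} {a b T : ℝ} {y z : ℝ → ℂ × ℂ}

lemma IsDiracSol.isIntegralCurveOn (hp : ContinuousOn p (Icc 0 T)) (hq : ContinuousOn q (Icc 0 T))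
    (hy : IsDiracSol p q T lam y) : IsIntegralCurveOn y (diracField p q lam) (Icc 0 T) := by
  intro x hx
  obtain ⟨hcont, hint⟩ := hy
  rw [diracField_apply]
  exact (hasDerivWithinAt_of_eq_add_integral (by fun_prop) (fun x hx => (hint x hx).1) hx).prodMk
    (hasDerivWithinAt_of_eq_add_integral (by fun_prop) (fun x hx => (hint x hx).2) hx)

lemma isIntegralCurveOn_diracField_linearCombination
    (hy : IsIntegralCurveOn y (diracField p q lam) (Icc a b))
    (hz : IsIntegralCurveOn z (diracField p q lam) (Icc a b)) (c d : ℂ) :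
    IsIntegralCurveOn (c • y + d • z) (diracField p q lam) (Icc a b) := by
  intro x hx
  refine (((hy x hx).const_smul c).add ((hz x hx).const_smul d)).congr_deriv ?_
  ext <;> simp [diracField_apply] <;> ring

lemma hasDerivWithinAt_of_isIntegralCurveOn_diracField
    (hy : IsIntegralCurveOn y (diracField p q lam) (Icc a b)) {x : ℝ} (hx : x ∈ Icc a b) :
    HasDerivWithinAt (fun t => (y t).1) (q x * (y x).1 - (p x + lam) * (y x).2) (Icc a b) x ∧
      HasDerivWithinAt (fun t => (y t).2) ((lam - p x) * (y x).1 - q x * (y x).2)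
        (Icc a b) x := by
  have hyx := hy x hx
  rw [diracField_apply] at hyx
  exact ⟨(ContinuousLinearMap.fst ℝ ℂ ℂ).hasFDerivAt.comp_hasDerivWithinAt x hyx,
    (ContinuousLinearMap.snd ℝ ℂ ℂ).hasFDerivAt.comp_hasDerivWithinAt x hyx⟩

lemma wronskian_eq_of_isIntegralCurveOn_diracField
    (hy : IsIntegralCurveOn y (diracField p q lam) (Icc a b))
    (hz : IsIntegralCurveOn z (diracField p q lam) (Icc a b)) {x : ℝ} (hx : x ∈ Icc a b) :
    (y x).1 * (z x).2 - (y x).2 * (z x).1 = (y a).1 * (z a).2 - (y a).2 * (z a).1 := by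
  have hderiv : ∀ x ∈ Icc a b,
      HasDerivWithinAt (fun t => (y t).1 * (z t).2 - (y t).2 * (z t).1) 0 (Icc a b) x := by
    intro x hx
    obtain ⟨hy₁, hy₂⟩ := hasDerivWithinAt_of_isIntegralCurveOn_diracField hy hx
    obtain ⟨hz₁, hz₂⟩ := hasDerivWithinAt_of_isIntegralCurveOn_diracField hz hx
    exact ((hy₁.mul hz₂).sub (hy₂.mul hz₁)).congr_deriv (by ring)
  exact constant_of_has_deriv_right_zero (fun x hx => (hderiv x hx).continuousWithinAt)
    (fun x hx => hasDerivWithinAt_Ici_of_Icc (hderiv x (Ico_subset_Icc_self hx)) hx) x hx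

end DiracSystem

section AKNS

variable {α β : ℝ → ℂ} {a b x M : ℝ} {lam : ℂ} {u v : ℝ → ℂ}

/-- `(u, v)` solves on `[a, b]` the system `u' = -iλu + αv`, `v' = iλv + βu` of
Zakharov–Shabat and Ablowitz–Kaup–Newell–Segur; this is the Dirac system in the coordinates
`u = y₁ - iy₂`, `v = y₁ + iy₂` which diagonalize its rotation part. -/
structure IsAKNSSol (α β : ℝ → ℂ) (a b : ℝ) (lam : ℂ) (u v : ℝ → ℂ) : Prop where
  hasDerivWithinAt_fst : ∀ x ∈ Icc a b,
    HasDerivWithinAt u (-(Complex.I * lam) * u x + α x * v x) (Icc a b) x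
  hasDerivWithinAt_snd : ∀ x ∈ Icc a b,
    HasDerivWithinAt v (Complex.I * lam * v x + β x * u x) (Icc a b) x

lemma isAKNSSol_of_isIntegralCurveOn_diracField {p q : ℝ → ℂ} {y : ℝ → ℂ × ℂ}
    (hy : IsIntegralCurveOn y (diracField p q lam) (Icc a b)) :
    IsAKNSSol (fun t => q t + Complex.I * p t) (fun t => q t - Complex.I * p t) a b lam
      (fun t => (y t).1 - Complex.I * (y t).2) (fun t => (y t).1 + Complex.I * (y t).2) := by
  constructor <;> intro x hx <;>
    obtain ⟨hy₁, hy₂⟩ := hasDerivWithinAt_of_isIntegralCurveOn_diracField hy hx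
  · refine (hy₁.sub (hy₂.const_mul Complex.I)).congr_deriv ?_
    linear_combination (-(lam * (y x).2) - p x * (y x).2) * Complex.I_sq
  · refine (hy₁.add (hy₂.const_mul Complex.I)).congr_deriv ?_
    linear_combination (-(lam * (y x).2) - p x * (y x).2) * Complex.I_sq

namespace IsAKNSSol

lemma norm_sq_add_norm_sq_le (h : IsAKNSSol α β a b lam u v)
    (hα : ∀ t ∈ Icc a b, ‖α t‖ ≤ M) (hβ : ∀ t ∈ Icc a b, ‖β t‖ ≤ M) (hx : x ∈ Icc a b) :
    ‖u x‖ ^ 2 + ‖v x‖ ^ 2 ≤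
      (‖u b‖ ^ 2 + ‖v b‖ ^ 2) * Real.exp (2 * (|lam.im| + M) * (b - x)) := by
  refine le_mul_exp_of_neg_mul_le_hasDerivWithinAt (fun t ht =>
    (h.hasDerivWithinAt_fst t ht).norm_sq.add (h.hasDerivWithinAt_snd t ht).norm_sq)
    (fun t ht => ?_) hx
  have hdiag (c w z : ℂ) : inner ℝ w (c * w + z) = c.re * ‖w‖ ^ 2 + inner ℝ w z := by
    rw [inner_add_right, Complex.inner, mul_assoc, Complex.mul_conj', ← Complex.ofReal_pow,
      Complex.re_mul_ofReal]
  have hcross {γ w z : ℂ} (hγ : ‖γ‖ ≤ M) : -(M * (‖w‖ * ‖z‖)) ≤ inner ℝ w (γ * z) := by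
    refine (abs_le.1 ((abs_real_inner_le_norm _ _).trans ?_)).1
    rw [norm_mul, mul_left_comm]
    gcongr
  rw [hdiag, hdiag]
  have hu := hcross (w := u t) (z := v t) (hα t ht)
  have hv := hcross (w := v t) (z := u t) (hβ t ht)
  have hM : 0 ≤ M := (norm_nonneg _).trans (hα t ht)
  simp only [Pi.add_apply, Complex.neg_re, Complex.mul_re, Complex.I_re, Complex.I_im]
  nlinarith [mul_nonneg hM (sq_nonneg (‖u t‖ - ‖v t‖)),
    mul_nonneg (sub_nonneg.2 (neg_abs_le lam.im)) (sq_nonneg ‖u t‖),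
    mul_nonneg (sub_nonneg.2 (le_abs_self lam.im)) (sq_nonneg ‖v t‖)]

lemma norm_sq_exp_mul_add_norm_sq_exp_mul_le (h : IsAKNSSol α β a b lam u v) (hlam : 0 ≤ lam.im)
    (hα : ∀ t ∈ Icc a b, ‖α t‖ ≤ M) (hβ : ∀ t ∈ Icc a b, ‖β t‖ ≤ M) (hx : x ∈ Icc a b) :
    ‖Complex.exp (Complex.I * lam * (b - x)) * u x‖ ^ 2 +
        ‖Complex.exp (Complex.I * lam * (b - x)) * v x‖ ^ 2 ≤
      (‖u b‖ ^ 2 + ‖v b‖ ^ 2) * Real.exp (2 * M * (b - a)) := by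
  have hM : 0 ≤ M := (norm_nonneg _).trans (hα x hx)
  have hexp : ‖Complex.exp (Complex.I * lam * (b - x))‖ ^ 2 =
      Real.exp (-(2 * lam.im * (b - x))) := by
    rw [Complex.norm_exp, ← Complex.ofReal_sub, Complex.re_mul_ofReal, ← Real.exp_nat_mul]
    simp [mul_assoc]
  calc _ = Real.exp (-(2 * lam.im * (b - x))) * (‖u x‖ ^ 2 + ‖v x‖ ^ 2) := by
        rw [norm_mul, norm_mul, mul_pow, mul_pow, hexp, mul_add]
    _ ≤ Real.exp (-(2 * lam.im * (b - x))) *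
          ((‖u b‖ ^ 2 + ‖v b‖ ^ 2) * Real.exp (2 * (|lam.im| + M) * (b - x))) := by
        gcongr
        exact h.norm_sq_add_norm_sq_le hα hβ hx
    _ = (‖u b‖ ^ 2 + ‖v b‖ ^ 2) * Real.exp (2 * M * (b - x)) := by
        rw [abs_of_nonneg hlam, mul_left_comm, ← Real.exp_add]
        ring_nf
    _ ≤ (‖u b‖ ^ 2 + ‖v b‖ ^ 2) * Real.exp (2 * M * (b - a)) := by
        gcongr
        exact hx.1

lemma norm_exp_mul_fst_le (h : IsAKNSSol α β a b lam u v) (hlam : 0 < lam.im)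
    (hα : ∀ t ∈ Icc a b, ‖α t‖ ≤ M) (hβ : ∀ t ∈ Icc a b, ‖β t‖ ≤ M) (hx : x ∈ Icc a b) :
    ‖Complex.exp (Complex.I * lam * (b - x)) * u x‖ ≤
      Real.exp (-(2 * lam.im * (b - x))) * ‖u b‖ +
        M * √((‖u b‖ ^ 2 + ‖v b‖ ^ 2) * Real.exp (2 * M * (b - a))) / (2 * lam.im) := by
  have hM : 0 ≤ M := (norm_nonneg _).trans (hα x hx)
  have hmod := norm_le_of_hasDerivWithinAt_mul_add (z := -(2 * Complex.I * lam)) (b := b)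
    (f := fun t : ℝ => Complex.exp (Complex.I * lam * (b - t)) * u t)
    (g := fun t : ℝ => α t * (Complex.exp (Complex.I * lam * (b - t)) * v t))
    (B := M * √((‖u b‖ ^ 2 + ‖v b‖ ^ 2) * Real.exp (2 * M * (b - a)))) (by simpa using hlam)
    (fun t ht => (hasDerivWithinAt_exp_mul (h.hasDerivWithinAt_fst t ht)
      (Complex.I * lam)).congr_deriv (by ring))
    (fun t ht => ?_) hx
  · simpa using hmod
  · rw [norm_mul]
    gcongr
    · exact hα t ht
    · exact Real.le_sqrt_of_sq_le ((le_add_of_nonneg_left (sq_nonneg _)).trans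
        (h.norm_sq_exp_mul_add_norm_sq_exp_mul_le hlam.le hα hβ ht))

lemma norm_exp_mul_snd_sub_le (h : IsAKNSSol α β a b lam u v) (hab : a ≤ b) (hlam : 0 < lam.im)
    (hα : ∀ t ∈ Icc a b, ‖α t‖ ≤ M) (hβ : ∀ t ∈ Icc a b, ‖β t‖ ≤ M) :
    ‖v b - Complex.exp (Complex.I * lam * (b - a)) * v a‖ ≤
      M * (‖u b‖ + M * √((‖u b‖ ^ 2 + ‖v b‖ ^ 2) * Real.exp (2 * M * (b - a))) * (b - a)) /
        (2 * lam.im) := by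
  have hM : 0 ≤ M := (norm_nonneg _).trans (hα a (left_mem_Icc.2 hab))
  set G := √((‖u b‖ ^ 2 + ‖v b‖ ^ 2) * Real.exp (2 * M * (b - a)))
  set η := lam.im
  have hbound : ∀ t, HasDerivAt
      (fun t => M * (‖u b‖ * (Real.exp (-(2 * η * (b - t))) / (2 * η)) + M * G / (2 * η) * t))
      (M * (Real.exp (-(2 * η * (b - t))) * ‖u b‖ + M * G / (2 * η))) t := fun t => by
    have hexp := (((hasDerivAt_id t).const_sub b).const_mul (2 * η)).neg.exp.div_const (2 * η)
    refine (((hexp.const_mul ‖u b‖).add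
      ((hasDerivAt_id t).const_mul (M * G / (2 * η)))).const_mul M).congr_deriv ?_
    simp only [Pi.neg_apply, id_eq]
    field_simp
  have hle := norm_sub_le_of_norm_hasDerivWithinAt_le hab
    (fun t ht => hasDerivWithinAt_exp_mul (h.hasDerivWithinAt_snd t ht) (Complex.I * lam)) hbound
    fun t ht => ?_
  · simp only [sub_self, mul_zero, Complex.exp_zero, one_mul, neg_zero, Real.exp_zero] at hle
    have hexp : 0 ≤ M * (‖u b‖ * (Real.exp (-(2 * η * (b - a))) / (2 * η))) := by positivity
    linear_combination hle + hexp
  · rw [add_sub_cancel_left, mul_left_comm, norm_mul]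
    gcongr
    · exact hβ t ht
    · exact h.norm_exp_mul_fst_le hlam hα hβ ht

end IsAKNSSol

end AKNS

section DiracGrowth

variable {p q : ℝ → ℂ} {a b x M : ℝ} {lam : ℂ}

lemma exists_norm_add_norm_le (hp : ContinuousOn p (Icc a b)) (hq : ContinuousOn q (Icc a b)) :
    ∃ M, ∀ t ∈ Icc a b, ‖p t‖ + ‖q t‖ ≤ M := by
  obtain ⟨M, hM⟩ := isCompact_Icc.exists_bound_of_continuousOn (hp.norm.add hq.norm)
  exact ⟨M, fun t ht => (le_abs_self _).trans (hM t ht)⟩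

lemma norm_add_I_mul_le (z w : ℂ) : ‖z + Complex.I * w‖ ≤ ‖z‖ + ‖w‖ := by
  simpa using norm_add_le z (Complex.I * w)

lemma norm_sub_I_mul_le (z w : ℂ) : ‖z - Complex.I * w‖ ≤ ‖z‖ + ‖w‖ := by
  simpa using norm_sub_le z (Complex.I * w)

lemma norm_sub_I_mul_sq_add_norm_add_I_mul_sq (z w : ℂ) :
    ‖z - Complex.I * w‖ ^ 2 + ‖z + Complex.I * w‖ ^ 2 = 2 * (‖z‖ ^ 2 + ‖w‖ ^ 2) := by
  have h := parallelogram_law_with_norm ℝ z (Complex.I * w)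
  simp only [norm_mul, Complex.norm_I, one_mul] at h
  linear_combination h

lemma norm_le_of_isIntegralCurveOn_diracField {y : ℝ → ℂ × ℂ}
    (hM : ∀ t ∈ Icc a b, ‖q t‖ + ‖p t‖ ≤ M)
    (hy : IsIntegralCurveOn y (diracField p q lam) (Icc a b)) (hx : x ∈ Icc a b) :
    ‖y x‖ ≤ 2 * ‖y b‖ * Real.exp ((|lam.im| + M) * (b - x)) := by
  have hsq := (isAKNSSol_of_isIntegralCurveOn_diracField hy).norm_sq_add_norm_sq_le
    (fun t ht => (norm_add_I_mul_le _ _).trans (hM t ht))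
    (fun t ht => (norm_sub_I_mul_le _ _).trans (hM t ht)) hx
  rw [norm_sub_I_mul_sq_add_norm_add_I_mul_sq, norm_sub_I_mul_sq_add_norm_add_I_mul_sq] at hsq
  have hx₂ : ‖y x‖ ^ 2 ≤ ‖(y x).1‖ ^ 2 + ‖(y x).2‖ ^ 2 := by
    rcases max_choice ‖(y x).1‖ ‖(y x).2‖ with h | h <;> rw [Prod.norm_def, h] <;> simp
  have hb₂ : ‖(y b).1‖ ^ 2 + ‖(y b).2‖ ^ 2 ≤ 2 * ‖y b‖ ^ 2 := by
    have h₁ := pow_le_pow_left₀ (norm_nonneg _) (norm_fst_le (y b)) 2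
    have h₂ := pow_le_pow_left₀ (norm_nonneg _) (norm_snd_le (y b)) 2
    linarith
  refine le_of_sq_le_sq ?_ (by positivity)
  calc ‖y x‖ ^ 2 ≤ (‖(y b).1‖ ^ 2 + ‖(y b).2‖ ^ 2) *
        Real.exp (2 * (|lam.im| + M) * (b - x)) := by linarith
    _ ≤ 4 * ‖y b‖ ^ 2 * Real.exp (2 * (|lam.im| + M) * (b - x)) := by
        gcongr
        linarith [sq_nonneg ‖y b‖]
    _ = (2 * ‖y b‖ * Real.exp ((|lam.im| + M) * (b - x))) ^ 2 := by
        rw [mul_pow, ← Real.exp_nat_mul]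
        push_cast
        ring_nf

lemma exists_norm_le_exp_of_isIntegralCurveOn_diracField {y : ℂ → ℝ → ℂ × ℂ} {c : ℂ × ℂ}
    (hp : ContinuousOn p (Icc a b)) (hq : ContinuousOn q (Icc a b))
    (hy : ∀ lam, IsIntegralCurveOn (y lam) (diracField p q lam) (Icc a b))
    (hyb : ∀ lam, y lam b = c) :
    ∃ C > 0, ∀ lam, ∀ x ∈ Icc a b, ‖y lam x‖ ≤ C * Real.exp (|lam.im| * (b - x)) := by
  obtain ⟨M, hM⟩ := exists_norm_add_norm_le hq hp
  refine ⟨(2 * ‖c‖ + 1) * Real.exp (M * (b - a)), by positivity, fun lam x hx => ?_⟩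
  have hM₀ : 0 ≤ M := (add_nonneg (norm_nonneg _) (norm_nonneg _)).trans (hM x hx)
  calc ‖y lam x‖ ≤ 2 * ‖c‖ * Real.exp ((|lam.im| + M) * (b - x)) := by
        simpa only [hyb] using norm_le_of_isIntegralCurveOn_diracField hM (hy lam) hx
    _ = 2 * ‖c‖ * Real.exp (M * (b - x)) * Real.exp (|lam.im| * (b - x)) := by
        rw [mul_assoc _ (Real.exp _) (Real.exp _), ← Real.exp_add]
        ring_nf
    _ ≤ (2 * ‖c‖ + 1) * Real.exp (M * (b - a)) * Real.exp (|lam.im| * (b - x)) := by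
        gcongr
        exacts [le_add_of_nonneg_right zero_le_one, hx.1]

lemma eqOn_of_isIntegralCurveOn_diracField {y z : ℝ → ℂ × ℂ}
    (hp : ContinuousOn p (Icc a b)) (hq : ContinuousOn q (Icc a b))
    (hy : IsIntegralCurveOn y (diracField p q lam) (Icc a b))
    (hz : IsIntegralCurveOn z (diracField p q lam) (Icc a b)) (hb : y b = z b) :
    EqOn y z (Icc a b) := by
  obtain ⟨M, hM⟩ := exists_norm_add_norm_le hq hp
  intro x hx
  have hle := norm_le_of_isIntegralCurveOn_diracField hM
    (isIntegralCurveOn_diracField_linearCombination hy hz 1 (-1)) hx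
  simpa [hb, ← sub_eq_add_neg, sub_eq_zero] using hle

end DiracGrowth

section UpperHalfPlaneAsymptotics

open scoped Topology

lemma IsAKNSSol.tendsto_exp_mul_fst {α β : ℝ → ℂ} {a b M : ℝ} {u v : ℂ → ℝ → ℂ} {c d : ℂ}
    (h : ∀ lam, IsAKNSSol α β a b lam (u lam) (v lam)) (hab : a < b)
    (hα : ∀ t ∈ Icc a b, ‖α t‖ ≤ M) (hβ : ∀ t ∈ Icc a b, ‖β t‖ ≤ M)
    (hu : ∀ lam, u lam b = c) (hv : ∀ lam, v lam b = d) :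
    Tendsto (fun lam => Complex.exp (Complex.I * lam * (b - a)) * u lam a)
      (comap Complex.im atTop) (𝓝 0) := by
  have him : Tendsto Complex.im (comap Complex.im atTop) atTop := tendsto_comap
  have hη := him.const_mul_atTop (two_pos (α := ℝ))
  have hexp := Real.tendsto_exp_neg_atTop_nhds_zero.comp
    (hη.atTop_mul_const (sub_pos.2 hab))
  have hlim := (hexp.mul_const ‖c‖).add
    (hη.const_div_atTop (M * √((‖c‖ ^ 2 + ‖d‖ ^ 2) * Real.exp (2 * M * (b - a)))))
  rw [zero_mul, add_zero] at hlim
  refine squeeze_zero_norm' ?_ hlim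
  filter_upwards [him.eventually_gt_atTop 0] with lam hlam
  simpa only [hu, hv, Function.comp_apply] using
    (h lam).norm_exp_mul_fst_le hlam hα hβ (left_mem_Icc.2 hab.le)

lemma IsAKNSSol.tendsto_exp_mul_snd {α β : ℝ → ℂ} {a b M : ℝ} {u v : ℂ → ℝ → ℂ} {c d : ℂ}
    (h : ∀ lam, IsAKNSSol α β a b lam (u lam) (v lam)) (hab : a ≤ b)
    (hα : ∀ t ∈ Icc a b, ‖α t‖ ≤ M) (hβ : ∀ t ∈ Icc a b, ‖β t‖ ≤ M)
    (hu : ∀ lam, u lam b = c) (hv : ∀ lam, v lam b = d) :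
    Tendsto (fun lam => Complex.exp (Complex.I * lam * (b - a)) * v lam a)
      (comap Complex.im atTop) (𝓝 d) := by
  have him : Tendsto Complex.im (comap Complex.im atTop) atTop := tendsto_comap
  rw [tendsto_iff_norm_sub_tendsto_zero]
  refine squeeze_zero' (.of_forall fun _ => norm_nonneg _) ?_
    ((him.const_mul_atTop (two_pos (α := ℝ))).const_div_atTop
      (M * (‖c‖ + M * √((‖c‖ ^ 2 + ‖d‖ ^ 2) * Real.exp (2 * M * (b - a))) * (b - a))))
  filter_upwards [him.eventually_gt_atTop 0] with lam hlam
  rw [norm_sub_rev]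
  simpa only [hu, hv] using (h lam).norm_exp_mul_snd_sub_le hab hlam hα hβ

lemma tendsto_exp_smul_of_isIntegralCurveOn_diracField {p q : ℝ → ℂ} {a b : ℝ}
    {y : ℂ → ℝ → ℂ × ℂ} {c : ℂ × ℂ} (hab : a < b)
    (hp : ContinuousOn p (Icc a b)) (hq : ContinuousOn q (Icc a b))
    (hy : ∀ lam, IsIntegralCurveOn (y lam) (diracField p q lam) (Icc a b))
    (hyb : ∀ lam, y lam b = c) :
    Tendsto (fun lam => Complex.exp (Complex.I * lam * (b - a)) • y lam a)
      (comap Complex.im atTop)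
      (𝓝 ((c.1 + Complex.I * c.2) / 2, (c.2 - Complex.I * c.1) / 2)) := by
  obtain ⟨M, hM⟩ := exists_norm_add_norm_le hq hp
  have hα : ∀ t ∈ Icc a b, ‖q t + Complex.I * p t‖ ≤ M := fun t ht =>
    (norm_add_I_mul_le _ _).trans (hM t ht)
  have hβ : ∀ t ∈ Icc a b, ‖q t - Complex.I * p t‖ ≤ M := fun t ht =>
    (norm_sub_I_mul_le _ _).trans (hM t ht)
  have hsol := fun lam => isAKNSSol_of_isIntegralCurveOn_diracField (hy lam)
  have hu := IsAKNSSol.tendsto_exp_mul_fst hsol hab hα hβ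
    (fun lam => by rw [hyb]) (fun lam => by rw [hyb])
  have hv := IsAKNSSol.tendsto_exp_mul_snd hsol hab.le hα hβ
    (fun lam => by rw [hyb]) (fun lam => by rw [hyb])
  refine Tendsto.prodMk_nhds ?_ ?_
  · convert ((hu.add hv).div_const 2).congr fun lam => ?_ using 2
    · rw [zero_add]
    · rw [smul_eq_mul]
      ring
  · convert ((hv.sub hu).mul_const (-Complex.I / 2)).congr fun lam => ?_ using 2
    · linear_combination (c.2 / 2) * Complex.I_sq
    · rw [smul_eq_mul]
      linear_combination
        (-Complex.exp (Complex.I * lam * (b - a)) * (y lam a).2) * Complex.I_sq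

end UpperHalfPlaneAsymptotics

section NonlocalForms

open scoped Topology

variable {T : ℝ}

lemma tendsto_setIntegral_mul_of_norm_le_exp {ι : Type*} {l : Filter ι} [l.IsCountablyGenerated]
    {μ : Measure ℝ} {w : ℝ → ℂ} (hw : Integrable w μ) {f : ι → ℝ → ℂ} {η : ι → ℝ} {C : ℝ} {c : ℂ}
    (hT : 0 ≤ T) (hη : Tendsto η l atTop) (hf : ∀ i, ContinuousOn (f i) (Icc 0 T))
    (hle : ∀ i, 0 ≤ η i → ∀ x ∈ Icc 0 T, ‖f i x‖ ≤ C * Real.exp (-η i * x))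
    (hf₀ : Tendsto (fun i => f i 0) l (𝓝 c)) :
    Tendsto (fun i => ∫ x in Icc 0 T, w x * f i x ∂μ) l
      (𝓝 (w 0 * ((μ {0}).toReal : ℂ) * c)) := by
  have hatom : ∫ x in Icc 0 T, ({0} : Set ℝ).indicator (fun x => w x * c) x ∂μ =
      w 0 * ((μ {0}).toReal : ℂ) * c := by
    rw [setIntegral_indicator (measurableSet_singleton 0),
      inter_eq_right.2 (singleton_subset_iff.2 (left_mem_Icc.2 hT)), integral_singleton,
      Complex.real_smul, measureReal_def]
    ring
  rw [← hatom]
  refine tendsto_integral_filter_of_dominated_convergence (fun x => ‖w x‖ * C)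
    (.of_forall fun i => hw.aestronglyMeasurable.restrict.mul
      ((hf i).aestronglyMeasurable measurableSet_Icc))
    ?_ (hw.norm.mul_const C).restrict ?_
  · filter_upwards [hη.eventually_ge_atTop 0] with i hi
    filter_upwards [ae_restrict_mem measurableSet_Icc] with x hx
    have hC : 0 ≤ C := by simpa using (norm_nonneg _).trans (hle i hi 0 (left_mem_Icc.2 hT))
    rw [norm_mul]
    gcongr
    refine (hle i hi x hx).trans (mul_le_of_le_one_right hC (Real.exp_le_one_iff.2 ?_))
    exact mul_nonpos_of_nonpos_of_nonneg (neg_nonpos.2 hi) hx.1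
  · filter_upwards [ae_restrict_mem measurableSet_Icc] with x hx
    rcases hx.1.eq_or_lt with rfl | hx₀
    · simpa using hf₀.const_mul (w 0)
    · rw [indicator_of_notMem (by simpa using hx₀.ne'), ← mul_zero (w x)]
      have hexp : Tendsto (fun i => C * Real.exp (-η i * x)) l (𝓝 0) := by
        simpa only [Function.comp_def, neg_mul, mul_zero] using
          (Real.tendsto_exp_neg_atTop_nhds_zero.comp (hη.atTop_mul_const hx₀)).const_mul C
      refine (squeeze_zero_norm' ?_ hexp).const_mul (w x)
      filter_upwards [hη.eventually_ge_atTop 0] with i hi using hle i hi x hx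

/-- Integration against the complex measure with density `w` with respect to `μ`, as a continuous
linear functional on the continuous functions on a compact space. -/
def integralMulCLM {X : Type*} [TopologicalSpace X] [CompactSpace X] [MeasurableSpace X]
    [BorelSpace X] (μ : Measure X) (w : X → ℂ) (hw : Integrable w μ) : C(X, ℂ) →L[ℂ] ℂ :=
  have hint (f : C(X, ℂ)) : Integrable (fun x => w x * f x) μ :=
    hw.mul_bdd f.continuous.aestronglyMeasurable (.of_forall f.norm_coe_le_norm)
  LinearMap.mkContinuous
    { toFun f := ∫ x, w x * f x ∂μ
      map_add' f g := by
        simp only [ContinuousMap.add_apply, mul_add]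
        exact integral_add (hint f) (hint g)
      map_smul' c f := by
        simp only [ContinuousMap.smul_apply, smul_eq_mul, mul_left_comm _ c, integral_const_mul,
          RingHom.id_apply] }
    (∫ x, ‖w x‖ ∂μ) fun f => by
      rw [← integral_mul_const]
      refine norm_integral_le_of_norm_le (hw.norm.mul_const _) (.of_forall fun x => ?_)
      rw [norm_mul]
      gcongr
      exact f.norm_coe_le_norm x

namespace NonlocalForm

/-- The nonlocal form as a continuous linear functional on `C([0, T], ℂ × ℂ)`. -/
def toCLM (U : NonlocalForm T) : C(Icc (0 : ℝ) T, ℂ × ℂ) →L[ℂ] ℂ :=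
  integralMulCLM (U.μ₁.comap Subtype.val) (U.w₁ ∘ Subtype.val)
      ((integrableOn_iff_comap_subtypeVal measurableSet_Icc).1 U.int₁.integrableOn) ∘L
    (ContinuousLinearMap.fst ℂ ℂ ℂ).compLeftContinuous ℂ (Icc (0 : ℝ) T) +
  integralMulCLM (U.μ₂.comap Subtype.val) (U.w₂ ∘ Subtype.val)
      ((integrableOn_iff_comap_subtypeVal measurableSet_Icc).1 U.int₂.integrableOn) ∘L
    (ContinuousLinearMap.snd ℂ ℂ ℂ).compLeftContinuous ℂ (Icc (0 : ℝ) T)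

variable (U : NonlocalForm T)

lemma toCLM_eq_app {f : C(Icc (0 : ℝ) T, ℂ × ℂ)} {y : ℝ → ℂ × ℂ} (hf : ∀ t, f t = y t) :
    U.toCLM f = U.app y := by
  simp only [toCLM, integralMulCLM, app, ← integral_subtype_comap measurableSet_Icc, ← hf]
  rfl

lemma app_linearCombination {y z : ℝ → ℂ × ℂ} (hy : ContinuousOn y (Icc 0 T))
    (hz : ContinuousOn z (Icc 0 T)) (c d : ℂ) :
    U.app (c • y + d • z) = c * U.app y + d * U.app z := by
  rw [← U.toCLM_eq_app (f := ⟨_, hy.domRestrict⟩) fun _ => rfl,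
    ← U.toCLM_eq_app (f := ⟨_, hz.domRestrict⟩) fun _ => rfl, ← smul_eq_mul, ← smul_eq_mul,
    ← map_smul, ← map_smul, ← map_add]
  exact (U.toCLM_eq_app fun _ => rfl).symm

lemma norm_app_le {y : ℝ → ℂ × ℂ} (hy : ContinuousOn y (Icc 0 T)) {C : ℝ} (hC : 0 ≤ C)
    (hle : ∀ x ∈ Icc 0 T, ‖y x‖ ≤ C) : ‖U.app y‖ ≤ ‖U.toCLM‖ * C := by
  rw [← U.toCLM_eq_app (f := ⟨_, hy.domRestrict⟩) fun _ => rfl]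
  exact U.toCLM.le_of_opNorm_le_of_le le_rfl
    ((ContinuousMap.norm_le _ hC).2 fun x => hle x x.2)

lemma app_congr {y z : ℝ → ℂ × ℂ} (h : EqOn y z (Icc 0 T)) : U.app y = U.app z := by
  unfold app
  congr 1 <;> exact setIntegral_congr_fun measurableSet_Icc fun x hx => by simp only [h hx]

lemma app_smul (c : ℂ) (y : ℝ → ℂ × ℂ) : U.app (c • y) = c * U.app y := by
  simp only [app, Pi.smul_apply, Prod.smul_fst, Prod.smul_snd, smul_eq_mul, mul_left_comm _ c,
    integral_const_mul, mul_add]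

lemma tendsto_app_of_norm_le_exp {ι : Type*} {l : Filter ι} [l.IsCountablyGenerated]
    {y : ι → ℝ → ℂ × ℂ} {η : ι → ℝ} {C : ℝ} {c : ℂ × ℂ} (hT : 0 ≤ T) (hη : Tendsto η l atTop)
    (hy : ∀ i, ContinuousOn (y i) (Icc 0 T))
    (hle : ∀ i, 0 ≤ η i → ∀ x ∈ Icc 0 T, ‖y i x‖ ≤ C * Real.exp (-η i * x))
    (hy₀ : Tendsto (fun i => y i 0) l (𝓝 c)) :
    Tendsto (fun i => U.app (y i)) l (𝓝 (U.h₁ * c.1 + U.h₂ * c.2)) :=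
  (tendsto_setIntegral_mul_of_norm_le_exp U.int₁ hT hη (fun i => (hy i).fst)
    (fun i hi x hx => (norm_fst_le _).trans (hle i hi x hx)) hy₀.fst_nhds).add
  (tendsto_setIntegral_mul_of_norm_le_exp U.int₂ hT hη (fun i => (hy i).snd)
    (fun i hi x hx => (norm_snd_le _).trans (hle i hi x hx)) hy₀.snd_nhds)

end NonlocalForm

end NonlocalForms

section CharacteristicFunction

open scoped Topology

variable {p q : ℝ → ℂ} {T : ℝ} {y : ℂ → ℝ → ℂ × ℂ} {c : ℂ × ℂ}

lemma differentiable_of_isIntegralCurveOn_diracField {a b : ℝ}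
    (hp : ContinuousOn p (Icc a b)) (hq : ContinuousOn q (Icc a b))
    (hy : ∀ lam, IsIntegralCurveOn (y lam) (diracField p q lam) (Icc a b))
    (hya : ∀ lam, y lam a = c) {Y : ℂ → C(Icc a b, ℂ × ℂ)} (hY : ∀ lam t, Y lam t = y lam t) :
    Differentiable ℂ Y := by
  obtain ⟨M, hM⟩ := exists_norm_add_norm_le hp hq
  exact differentiable_of_isIntegralCurveOn_pencil (A := fun t => diracPotential (p t) (q t))
    (fun t ht => (norm_diracPotential_le _ _).trans (hM t ht)) hy hya hY

lemma differentiable_apply_of_isIntegralCurveOn_diracField {a b x : ℝ}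
    (hp : ContinuousOn p (Icc a b)) (hq : ContinuousOn q (Icc a b)) (hx : x ∈ Icc a b)
    (hy : ∀ lam, IsIntegralCurveOn (y lam) (diracField p q lam) (Icc a b))
    (hya : ∀ lam, y lam a = c) : Differentiable ℂ fun lam => y lam x :=
  (ContinuousMap.evalCLM ℂ (M := ℂ × ℂ) (⟨x, hx⟩ : Icc a b)).differentiable.comp
    (differentiable_of_isIntegralCurveOn_diracField hp hq hy hya
      (Y := fun lam => ⟨_, (hy lam).continuousOn.domRestrict⟩) fun _ _ => rfl)

/-- The combination of solutions `x₁`, `x₂` with unit Wronskian that takes the value `(0, 1)`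
at `T`. -/
def terminalSol (x₁ x₂ : ℝ → ℂ × ℂ) (T : ℝ) : ℝ → ℂ × ℂ :=
  (x₁ T).1 • x₂ + (-(x₂ T).1) • x₁

lemma terminalSol_apply_right {lam : ℂ} {x₁ x₂ : ℝ → ℂ × ℂ} (hT : 0 ≤ T)
    (hx₁ : IsIntegralCurveOn x₁ (diracField p q lam) (Icc 0 T))
    (hx₂ : IsIntegralCurveOn x₂ (diracField p q lam) (Icc 0 T))
    (h₁ : x₁ 0 = (1, 0)) (h₂ : x₂ 0 = (0, 1)) : terminalSol x₁ x₂ T T = (0, 1) := by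
  have hW := wronskian_eq_of_isIntegralCurveOn_diracField hx₁ hx₂ (right_mem_Icc.2 hT)
  simp only [h₁, h₂, mul_one, mul_zero, sub_zero] at hW
  ext
  · simp [terminalSol, mul_comm]
  · simp only [terminalSol, Pi.add_apply, Pi.smul_apply, Prod.snd_add, Prod.smul_snd, smul_eq_mul]
    linear_combination hW

lemma isIntegralCurveOn_terminalSol {a b : ℝ} {lam : ℂ} {x₁ x₂ : ℝ → ℂ × ℂ}
    (hx₁ : IsIntegralCurveOn x₁ (diracField p q lam) (Icc a b))
    (hx₂ : IsIntegralCurveOn x₂ (diracField p q lam) (Icc a b)) :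
    IsIntegralCurveOn (terminalSol x₁ x₂ T) (diracField p q lam) (Icc a b) :=
  isIntegralCurveOn_diracField_linearCombination hx₂ hx₁ _ _

lemma eqOn_smul_of_fst_eq_zero {a b : ℝ} {lam : ℂ} {y z : ℝ → ℂ × ℂ}
    (hp : ContinuousOn p (Icc a b)) (hq : ContinuousOn q (Icc a b))
    (hy : IsIntegralCurveOn y (diracField p q lam) (Icc a b))
    (hz : IsIntegralCurveOn z (diracField p q lam) (Icc a b))
    (hyb : (y b).1 = 0) (hzb : z b = (0, 1)) : EqOn y ((y b).2 • z) (Icc a b) := by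
  have hcz := isIntegralCurveOn_diracField_linearCombination hz hz (y b).2 0
  rw [zero_smul, add_zero] at hcz
  exact eqOn_of_isIntegralCurveOn_diracField hp hq hy hcz (by ext <;> simp [hyb, hzb])

namespace NonlocalForm

variable (U : NonlocalForm T)

lemma app_terminalSol {x₁ x₂ : ℝ → ℂ × ℂ} (hx₁ : ContinuousOn x₁ (Icc 0 T))
    (hx₂ : ContinuousOn x₂ (Icc 0 T)) :
    U.app (terminalSol x₁ x₂ T) = (x₁ T).1 * U.app x₂ - (x₂ T).1 * U.app x₁ := by
  rw [terminalSol, U.app_linearCombination hx₂ hx₁, neg_mul, sub_eq_add_neg]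

lemma differentiable_app (hp : ContinuousOn p (Icc 0 T)) (hq : ContinuousOn q (Icc 0 T))
    (hy : ∀ lam, IsIntegralCurveOn (y lam) (diracField p q lam) (Icc 0 T))
    (hy₀ : ∀ lam, y lam 0 = c) : Differentiable ℂ fun lam => U.app (y lam) := by
  simp only [← fun lam => U.toCLM_eq_app (f := ⟨_, (hy lam).continuousOn.domRestrict⟩)
    (y := y lam) fun _ => rfl]
  exact U.toCLM.differentiable.comp
    (differentiable_of_isIntegralCurveOn_diracField hp hq hy hy₀ fun _ _ => rfl)

lemma differentiable_app_terminalSol {x₁ x₂ : ℂ → ℝ → ℂ × ℂ} {c₁ c₂ : ℂ × ℂ} (hT : 0 ≤ T)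
    (hp : ContinuousOn p (Icc 0 T)) (hq : ContinuousOn q (Icc 0 T))
    (hx₁ : ∀ lam, IsIntegralCurveOn (x₁ lam) (diracField p q lam) (Icc 0 T))
    (hx₂ : ∀ lam, IsIntegralCurveOn (x₂ lam) (diracField p q lam) (Icc 0 T))
    (hc₁ : ∀ lam, x₁ lam 0 = c₁) (hc₂ : ∀ lam, x₂ lam 0 = c₂) :
    Differentiable ℂ fun lam => U.app (terminalSol (x₁ lam) (x₂ lam) T) := by
  have hTmem := right_mem_Icc.2 hT
  have hT₁ := differentiable_apply_of_isIntegralCurveOn_diracField hp hq hTmem hx₁ hc₁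
  have hT₂ := differentiable_apply_of_isIntegralCurveOn_diracField hp hq hTmem hx₂ hc₂
  simp only [fun lam => U.app_terminalSol (hx₁ lam).continuousOn (hx₂ lam).continuousOn]
  exact (hT₁.fst.mul (U.differentiable_app hp hq hx₂ hc₂)).sub
    (hT₂.fst.mul (U.differentiable_app hp hq hx₁ hc₁))

lemma tendsto_exp_mul_app (hT : 0 < T)
    (hp : ContinuousOn p (Icc 0 T)) (hq : ContinuousOn q (Icc 0 T))
    (hy : ∀ lam, IsIntegralCurveOn (y lam) (diracField p q lam) (Icc 0 T))
    (hyT : ∀ lam, y lam T = c) :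
    Tendsto (fun lam => Complex.exp (Complex.I * lam * T) * U.app (y lam))
      (comap Complex.im atTop)
      (𝓝 ((U.h₁ - Complex.I * U.h₂) * ((c.1 + Complex.I * c.2) / 2))) := by
  obtain ⟨C, -, hC⟩ := exists_norm_le_exp_of_isIntegralCurveOn_diracField hp hq hy hyT
  have hlim := tendsto_exp_smul_of_isIntegralCurveOn_diracField hT hp hq hy hyT
  simp only [Complex.ofReal_zero, sub_zero] at hlim
  have hexp (lam : ℂ) : ‖Complex.exp (Complex.I * lam * T)‖ = Real.exp (-(lam.im * T)) := by
    simp [Complex.norm_exp]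
  have hle (lam : ℂ) (hlam : 0 ≤ lam.im) (x : ℝ) (hx : x ∈ Icc 0 T) :
      ‖Complex.exp (Complex.I * lam * T) • y lam x‖ ≤ C * Real.exp (-lam.im * x) := by
    rw [norm_smul, hexp]
    calc Real.exp (-(lam.im * T)) * ‖y lam x‖
        ≤ Real.exp (-(lam.im * T)) * (C * Real.exp (|lam.im| * (T - x))) := by
          gcongr
          exact hC lam x hx
      _ = C * Real.exp (-lam.im * x) := by
          rw [abs_of_nonneg hlam, mul_left_comm, ← Real.exp_add]
          ring_nf
  have happ := U.tendsto_app_of_norm_le_exp hT.le tendsto_comap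
    (fun lam => (hy lam).continuousOn.const_smul (Complex.exp (Complex.I * lam * T))) hle hlim
  simp only [← app_smul]
  convert happ using 2
  linear_combination (-U.h₂ * c.2 / 2) * Complex.I_sq

lemma exists_exp_le_norm_app_of_le_im (hT : 0 < T) (hU : U.h₁ - Complex.I * U.h₂ ≠ 0)
    (hp : ContinuousOn p (Icc 0 T)) (hq : ContinuousOn q (Icc 0 T))
    (hy : ∀ lam, IsIntegralCurveOn (y lam) (diracField p q lam) (Icc 0 T))
    (hyT : ∀ lam, y lam T = c) (hc : c.1 + Complex.I * c.2 ≠ 0) :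
    ∃ K, ∃ m > 0, ∀ lam : ℂ, K ≤ lam.im → m * Real.exp (lam.im * T) ≤ ‖U.app (y lam)‖ := by
  set L := (U.h₁ - Complex.I * U.h₂) * ((c.1 + Complex.I * c.2) / 2)
  have hL : 0 < ‖L‖ := norm_pos_iff.2 (mul_ne_zero hU (div_ne_zero hc two_ne_zero))
  have hev := (U.tendsto_exp_mul_app hT hp hq hy hyT).norm.eventually_const_lt (half_lt_self hL)
  obtain ⟨K, -, hK⟩ := (atTop_basis.comap Complex.im).eventually_iff.1 hev
  refine ⟨K, ‖L‖ / 2, half_pos hL, fun lam hlam => ?_⟩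
  have hlt : ‖L‖ / 2 < Real.exp (-(lam.im * T)) * ‖U.app (y lam)‖ := by
    simpa [Complex.norm_exp] using hK hlam
  rw [Real.exp_neg, inv_mul_eq_div, lt_div_iff₀ (Real.exp_pos _)] at hlt
  exact hlt.le

lemma exists_forall_abs_im_le_norm_app_le
    (hp : ContinuousOn p (Icc 0 T)) (hq : ContinuousOn q (Icc 0 T))
    (hy : ∀ lam, IsIntegralCurveOn (y lam) (diracField p q lam) (Icc 0 T))
    (hyT : ∀ lam, y lam T = c) (S : ℝ) :
    ∃ A, ∀ lam : ℂ, |lam.im| ≤ S → ‖U.app (y lam)‖ ≤ A := by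
  obtain ⟨C, hC₀, hC⟩ := exists_norm_le_exp_of_isIntegralCurveOn_diracField hp hq hy hyT
  refine ⟨_, fun lam hlam => U.norm_app_le (hy lam).continuousOn
    (C := C * Real.exp (S * T)) (by positivity) fun x hx => (hC lam x hx).trans ?_⟩
  have hS : 0 ≤ S := (abs_nonneg _).trans hlam
  gcongr
  exacts [sub_nonneg.2 hx.2, sub_le_self _ hx.1]

lemma exists_exp_le_norm_app_of_dist_zeros (hT : 0 < T) (hU : U.h₁ - Complex.I * U.h₂ ≠ 0)
    (hp : ContinuousOn p (Icc 0 T)) (hq : ContinuousOn q (Icc 0 T))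
    (hy : ∀ lam, IsIntegralCurveOn (y lam) (diracField p q lam) (Icc 0 T))
    (hyT : ∀ lam, y lam T = c) (hc : c.1 + Complex.I * c.2 ≠ 0)
    (hdiff : Differentiable ℂ fun lam => U.app (y lam)) {δ : ℝ} (hδ : 0 < δ) :
    ∃ m > 0, ∀ lam : ℂ, 0 ≤ lam.im → (∀ z, U.app (y z) = 0 → δ ≤ dist lam z) →
      m * Real.exp (lam.im * T) ≤ ‖U.app (y lam)‖ := by
  obtain ⟨K, m, hm, hK⟩ := U.exists_exp_le_norm_app_of_le_im hT hU hp hq hy hyT hc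
  obtain ⟨m', hm', hstrip⟩ := exists_pos_le_norm_of_dist_zeros hdiff
    (U.exists_forall_abs_im_le_norm_app_le hp hq hy hyT) (K := max K 0) hm (fun z hz => by
      refine le_trans ?_ (hK z ((le_max_left _ _).trans hz))
      exact le_mul_of_one_le_right hm.le
        (Real.one_le_exp (mul_nonneg ((le_max_right _ _).trans hz) hT.le))) hδ
  refine ⟨min m (m' * Real.exp (-(max K 0 * T))), by positivity, fun lam hlam hdist => ?_⟩
  rcases le_total (max K 0) lam.im with hhigh | hlow
  · calc _ ≤ m * Real.exp (lam.im * T) := by gcongr; exact min_le_left _ _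
      _ ≤ ‖U.app (y lam)‖ := hK lam ((le_max_left _ _).trans hhigh)
  · calc _ ≤ m' * Real.exp (-(max K 0 * T)) * Real.exp (max K 0 * T) := by
          gcongr
          exact min_le_right _ _
      _ = m' := by rw [mul_assoc, ← Real.exp_add, neg_add_cancel, Real.exp_zero, mul_one]
      _ ≤ ‖U.app (y lam)‖ := hstrip lam hlam hlow hdist

lemma exists_norm_le_exp_of_exp_le_norm_app
    (hp : ContinuousOn p (Icc 0 T)) (hq : ContinuousOn q (Icc 0 T))
    (hy : ∀ lam, IsIntegralCurveOn (y lam) (diracField p q lam) (Icc 0 T))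
    (hyT : ∀ lam, y lam T = (0, 1)) {m : ℝ} (hm : 0 < m) :
    ∃ C > 0, ∀ lam : ℂ, 0 ≤ lam.im → m * Real.exp (lam.im * T) ≤ ‖U.app (y lam)‖ →
      ∀ φ, IsIntegralCurveOn φ (diracField p q lam) (Icc 0 T) → U.app φ = 1 → (φ T).1 = 0 →
        ∀ x ∈ Icc 0 T, ‖φ x‖ ≤ C * Real.exp (-lam.im * x) := by
  obtain ⟨C, hC₀, hC⟩ := exists_norm_le_exp_of_isIntegralCurveOn_diracField hp hq hy hyT
  refine ⟨C / m, by positivity, fun lam hlam hlow φ hφ hUφ hφT x hx => ?_⟩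
  have hEq := eqOn_smul_of_fst_eq_zero hp hq hφ (hy lam) hφT (hyT lam)
  have hcoef : ‖(φ T).2‖ * ‖U.app (y lam)‖ = 1 := by
    rw [← norm_mul, ← app_smul, ← U.app_congr hEq, hUφ, norm_one]
  calc ‖φ x‖ = ‖(φ T).2‖ * ‖y lam x‖ := by rw [hEq hx, Pi.smul_apply, norm_smul]
    _ = ‖U.app (y lam)‖⁻¹ * ‖y lam x‖ := by rw [eq_inv_of_mul_eq_one_left hcoef]
    _ ≤ (m * Real.exp (lam.im * T))⁻¹ * (C * Real.exp (|lam.im| * (T - x))) := by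
        gcongr
        exact hC lam x hx
    _ = C / m * Real.exp (-lam.im * x) := by
        rw [abs_of_nonneg hlam, mul_inv, ← Real.exp_neg, div_eq_mul_inv,
          show -lam.im * x = -(lam.im * T) + lam.im * (T - x) by ring, Real.exp_add]
        ring

end NonlocalForm

end CharacteristicFunction

theorem statement17_general
    (T : ℝ) (hT : 0 < T)
    (p q : ℝ → ℂ) (hp : ContinuousOn p (Icc 0 T)) (hq : ContinuousOn q (Icc 0 T))
    (U₁ : NonlocalForm T)
    (hh : U₁.h₁ - Complex.I * U₁.h₂ ≠ 0)
    (X₁ X₂ Z₁ : ℂ → ℝ → ℂ × ℂ)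
    (hX₁ : ∀ lam, IsDiracSol p q T lam (X₁ lam) ∧ X₁ lam 0 = (1, 0))
    (hX₂ : ∀ lam, IsDiracSol p q T lam (X₂ lam) ∧ X₂ lam 0 = (0, 1))
    (hZ₁ : ∀ lam, IsDiracSol p q T lam (Z₁ lam) ∧ Z₁ lam T = (1, 0))
    (Δ₁ : ℂ → ℂ)
    (hΔ₁ : ∀ lam, Δ₁ lam =
      U₁.app (X₁ lam) * (X₂ lam T).1 - U₁.app (X₂ lam) * (X₁ lam T).1) :
    (∃ C > (0 : ℝ), ∀ lam : ℂ, 0 ≤ lam.im → ∀ x ∈ Icc (0 : ℝ) T,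
      ‖Z₁ lam x‖ ≤ C * Real.exp (lam.im * (T - x))) ∧
    (∀ δ > (0 : ℝ), ∃ C > (0 : ℝ), ∀ lam : ℂ, 0 ≤ lam.im →
      (∀ z : ℂ, Δ₁ z = 0 → δ ≤ dist lam z) →
      Δ₁ lam ≠ 0 ∧
        ∀ Φ : ℝ → ℂ × ℂ, IsDiracSol p q T lam Φ → U₁.app Φ = 1 → (Φ T).1 = 0 →
          ∀ x ∈ Icc (0 : ℝ) T, ‖Φ x‖ ≤ C * Real.exp (-lam.im * x)) := by
  have hx₁ := fun lam => (hX₁ lam).1.isIntegralCurveOn hp hq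
  have hx₂ := fun lam => (hX₂ lam).1.isIntegralCurveOn hp hq
  have hz := fun lam => isIntegralCurveOn_terminalSol (T := T) (hx₁ lam) (hx₂ lam)
  have hzT := fun lam =>
    terminalSol_apply_right hT.le (hx₁ lam) (hx₂ lam) (hX₁ lam).2 (hX₂ lam).2
  have hzΔ : ∀ lam, U₁.app (terminalSol (X₁ lam) (X₂ lam) T) = -Δ₁ lam := fun lam => by
    rw [U₁.app_terminalSol (hx₁ lam).continuousOn (hx₂ lam).continuousOn, hΔ₁]
    ring
  have hdiff := U₁.differentiable_app_terminalSol hT.le hp hq hx₁ hx₂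
    (fun lam => (hX₁ lam).2) (fun lam => (hX₂ lam).2)
  constructor
  · obtain ⟨C, hC, hZ⟩ := exists_norm_le_exp_of_isIntegralCurveOn_diracField hp hq
      (fun lam => (hZ₁ lam).1.isIntegralCurveOn hp hq) (fun lam => (hZ₁ lam).2)
    exact ⟨C, hC, fun lam hlam x hx => by simpa only [abs_of_nonneg hlam] using hZ lam x hx⟩
  · intro δ hδ
    obtain ⟨m, hm, hlow⟩ := U₁.exists_exp_le_norm_app_of_dist_zeros hT hh hp hq hz hzT (by simp)
      hdiff hδ
    obtain ⟨C, hC, hΦ⟩ := U₁.exists_norm_le_exp_of_exp_le_norm_app hp hq hz hzT hm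
    refine ⟨C, hC, fun lam hlam hdist => ?_⟩
    have hle := hlow lam hlam (by simpa only [hzΔ, neg_eq_zero] using hdist)
    refine ⟨fun h₀ => ?_, fun Φ hsol => hΦ lam hlam hle Φ (hsol.isIntegralCurveOn hp hq)⟩
    rw [hzΔ, h₀, neg_zero, norm_zero] at hle
    exact hle.not_gt (by positivity)

/-- **Equations (26)–(27)** (growth estimates in the upper half-plane):
(i) `‖Z₁(x,λ)‖ ≤ C e^{Im λ (T−x)}` for `Im λ ≥ 0`;
(ii) for every `δ > 0`, if `Im λ ≥ 0` and `λ` has distance `≥ δ` from every zero of `Δ₁`,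
then `Δ₁(λ) ≠ 0` and `‖Φ(x,λ)‖ ≤ C_δ e^{−Im λ · x}` on `[0,T]`. -/
theorem statement17
    (T : ℝ) (hT : 0 < T)
    (p q : ℝ → ℂ) (hp : AbsContOn p T) (hq : AbsContOn q T)
    (U₁ : NonlocalForm T)
    (hh : U₁.h₁ - Complex.I * U₁.h₂ ≠ 0)
    (X₁ X₂ Z₁ : ℂ → ℝ → ℂ × ℂ)
    (hX₁ : ∀ lam, IsDiracSol p q T lam (X₁ lam) ∧ X₁ lam 0 = (1, 0))
    (hX₂ : ∀ lam, IsDiracSol p q T lam (X₂ lam) ∧ X₂ lam 0 = (0, 1))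
    (hZ₁ : ∀ lam, IsDiracSol p q T lam (Z₁ lam) ∧ Z₁ lam T = (1, 0))
    (Δ₁ : ℂ → ℂ)
    (hΔ₁ : ∀ lam, Δ₁ lam =
      U₁.app (X₁ lam) * (X₂ lam T).1 - U₁.app (X₂ lam) * (X₁ lam T).1)
    (hΔ₁ne : ∃ lam, Δ₁ lam ≠ 0) :
    (∃ C > (0 : ℝ), ∀ lam : ℂ, 0 ≤ lam.im → ∀ x ∈ Icc (0 : ℝ) T,
      ‖Z₁ lam x‖ ≤ C * Real.exp (lam.im * (T - x))) ∧
    (∀ δ > (0 : ℝ), ∃ C > (0 : ℝ), ∀ lam : ℂ, 0 ≤ lam.im →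
      (∀ z : ℂ, Δ₁ z = 0 → δ ≤ dist lam z) →
      Δ₁ lam ≠ 0 ∧
        ∀ Φ : ℝ → ℂ × ℂ, IsDiracSol p q T lam Φ → U₁.app Φ = 1 → (Φ T).1 = 0 →
          ∀ x ∈ Icc (0 : ℝ) T, ‖Φ x‖ ≤ C * Real.exp (-lam.im * x)) :=
  statement17_general T hT p q (hp.continuousOn hT.le) (hq.continuousOn hT.le) U₁ hh X₁ X₂ Z₁ hX₁
    hX₂ hZ₁ Δ₁ hΔ₁
end
end

section
/- A common eigenvalue of L₁ and L₂ is an eigenvalue of L₀: If λ₀ ∈ ℂ satisfies Δ₁(λ₀) = 0 and Δ₂(λ₀) = 0, then ω(λ₀) = 0. (Consequently, if Δ₁ and ω have no common zeros, then Δ₁ and Δ₂ have no common zeros.) -/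
open MeasureTheory Set Filter

noncomputable section

/-!
Written as `y' = A y`, the Dirac system has a trace-free coefficient matrix. Hence the Wronskian of
two solutions, an absolutely continuous function, has derivative zero almost everywhere and is
constant. For `X₁`, `X₂` it equals `1`, so their first components do not both vanish at `T`. Thus
`Δ₁ = Δ₂ = 0` exhibits a nonzero vector in the kernel of the matrix `(U_j(X_k))`, whose determinant
is `ω`.
-/

section Primitive

variable {X Y E : Type*} [PseudoMetricSpace X] [PseudoMetricSpace Y]
  [NormedAddCommGroup E] [NormedSpace ℝ E] {a b : ℝ}

theorem absolutelyContinuousOnInterval_of_dist_le {f : ℝ → X} {g : ℝ → Y}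
    (hg : AbsolutelyContinuousOnInterval g a b)
    (hfg : ∀ x ∈ uIcc a b, ∀ y ∈ uIcc a b, dist (f x) (f y) ≤ dist (g x) (g y)) :
    AbsolutelyContinuousOnInterval f a b := by
  refine squeeze_zero' (.of_forall fun _ ↦ Finset.sum_nonneg fun _ _ ↦ dist_nonneg) ?_ hg
  refine eventually_inf_principal.mpr (.of_forall fun I hI ↦ Finset.sum_le_sum fun i hi ↦ ?_)
  exact hfg _ (hI.1 i hi).1 _ (hI.1 i hi).2

/-- `F` is a primitive of the Lebesgue integrable function `f` on the interval `uIcc a b`, in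
integral form. -/
structure IsPrimitiveOn (F f : ℝ → E) (a b : ℝ) : Prop where
  intervalIntegrable : IntervalIntegrable f volume a b
  eq_add_integral : ∀ x ∈ uIcc a b, F x = F a + ∫ t in a..x, f t

variable {F f : ℝ → E}

namespace IsPrimitiveOn

theorem sub_eq_integral (h : IsPrimitiveOn F f a b) {x y : ℝ} (hx : x ∈ uIcc a b)
    (hy : y ∈ uIcc a b) : F y - F x = ∫ t in x..y, f t := by
  have integrable_to {z : ℝ} (hz : z ∈ uIcc a b) : IntervalIntegrable f volume a z :=
    h.intervalIntegrable.mono_set (uIcc_subset_uIcc_left hz)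
  rw [h.eq_add_integral y hy, h.eq_add_integral x hx, add_sub_add_left_eq_sub,
    intervalIntegral.integral_interval_sub_left (integrable_to hy) (integrable_to hx)]

theorem dist_le_dist_integral_norm (h : IsPrimitiveOn F f a b) {x y : ℝ} (hx : x ∈ uIcc a b)
    (hy : y ∈ uIcc a b) :
    dist (F x) (F y) ≤ dist (∫ t in a..x, ‖f t‖) (∫ t in a..y, ‖f t‖) := by
  have integrable_to {z : ℝ} (hz : z ∈ uIcc a b) :
      IntervalIntegrable (fun t ↦ ‖f t‖) volume a z :=
    h.intervalIntegrable.norm.mono_set (uIcc_subset_uIcc_left hz)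
  rw [dist_eq_norm', h.sub_eq_integral hx hy, Real.dist_eq, abs_sub_comm,
    intervalIntegral.integral_interval_sub_left (integrable_to hy) (integrable_to hx)]
  exact intervalIntegral.norm_integral_le_abs_integral_norm

theorem absolutelyContinuousOnInterval (h : IsPrimitiveOn F f a b) :
    AbsolutelyContinuousOnInterval F a b :=
  absolutelyContinuousOnInterval_of_dist_le
    (h.intervalIntegrable.norm.absolutelyContinuousOnInterval_intervalIntegral left_mem_uIcc)
    fun _ hx _ hy ↦ h.dist_le_dist_integral_norm hx hy

theorem ae_hasDerivAt [CompleteSpace E] (h : IsPrimitiveOn F f a b) :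
    ∀ᵐ x, x ∈ uIcc a b → HasDerivAt F (f x) x := by
  filter_upwards [h.intervalIntegrable.ae_hasDerivAt_integral,
    Measure.ae_ne volume (min a b), Measure.ae_ne volume (max a b)] with x hderiv hmin hmax hx
  have huIcc : uIcc a b ∈ nhds x :=
    Icc_mem_nhds (hx.1.lt_of_ne' hmin) (hx.2.lt_of_ne hmax)
  exact ((hderiv hx a left_mem_uIcc).const_add (F a)).congr_of_eventuallyEq
    (eventually_of_mem huIcc h.eq_add_integral)

end IsPrimitiveOn

end Primitive

theorem AbsContOn.intervalIntegrable {f : ℝ → ℂ} {T : ℝ} (hT : 0 ≤ T) (hf : AbsContOn f T) :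
    IntervalIntegrable f volume 0 T := by
  obtain ⟨g, hg, hfg⟩ := hf
  have hprim : IsPrimitiveOn f g 0 T := ⟨hg, by rwa [uIcc_of_le hT]⟩
  exact hprim.absolutelyContinuousOnInterval.continuousOn.intervalIntegrable

/-- The Wronskian `y₁ z₂ - y₂ z₁` of two vector functions, the determinant of the matrix with
columns `y` and `z`. -/
def diracWronskian (y z : ℝ → ℂ × ℂ) (x : ℝ) : ℂ := (y x).1 * (z x).2 - (y x).2 * (z x).1

namespace IsDiracSol

variable {p q : ℝ → ℂ} {T : ℝ} {lam : ℂ} {y z : ℝ → ℂ × ℂ}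

theorem isPrimitiveOn_fst (hT : 0 ≤ T) (hp : IntervalIntegrable p volume 0 T)
    (hq : IntervalIntegrable q volume 0 T) (hy : IsDiracSol p q T lam y) :
    IsPrimitiveOn (fun x ↦ (y x).1) (fun x ↦ q x * (y x).1 - (p x + lam) * (y x).2) 0 T := by
  obtain ⟨hcont, hint⟩ := hy
  rw [← uIcc_of_le hT] at hcont hint
  exact ⟨(hq.mul_continuousOn hcont.fst).sub
    ((hp.add intervalIntegrable_const).mul_continuousOn hcont.snd), fun x hx ↦ (hint x hx).1⟩

theorem isPrimitiveOn_snd (hT : 0 ≤ T) (hp : IntervalIntegrable p volume 0 T)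
    (hq : IntervalIntegrable q volume 0 T) (hy : IsDiracSol p q T lam y) :
    IsPrimitiveOn (fun x ↦ (y x).2) (fun x ↦ (lam - p x) * (y x).1 - q x * (y x).2) 0 T := by
  obtain ⟨hcont, hint⟩ := hy
  rw [← uIcc_of_le hT] at hcont hint
  exact ⟨((intervalIntegrable_const.sub hp).mul_continuousOn hcont.fst).sub
    (hq.mul_continuousOn hcont.snd), fun x hx ↦ (hint x hx).2⟩

theorem diracWronskian_eq (hT : 0 ≤ T) (hp : IntervalIntegrable p volume 0 T)
    (hq : IntervalIntegrable q volume 0 T) (hy : IsDiracSol p q T lam y)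
    (hz : IsDiracSol p q T lam z) : diracWronskian y z T = diracWronskian y z 0 := by
  have hy₁ := hy.isPrimitiveOn_fst hT hp hq
  have hy₂ := hy.isPrimitiveOn_snd hT hp hq
  have hz₁ := hz.isPrimitiveOn_fst hT hp hq
  have hz₂ := hz.isPrimitiveOn_snd hT hp hq
  have hac : AbsolutelyContinuousOnInterval (diracWronskian y z) 0 T :=
    (hy₁.absolutelyContinuousOnInterval.smul hz₂.absolutelyContinuousOnInterval).sub
      (hy₂.absolutelyContinuousOnInterval.smul hz₁.absolutelyContinuousOnInterval)
  have hderiv : ∀ᵐ x, x ∈ uIcc 0 T → HasDerivAt (diracWronskian y z) 0 x := by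
    filter_upwards [hy₁.ae_hasDerivAt, hy₂.ae_hasDerivAt, hz₁.ae_hasDerivAt, hz₂.ae_hasDerivAt]
      with x hy₁' hy₂' hz₁' hz₂' hx
    refine (((hy₁' hx).mul (hz₂' hx)).sub ((hy₂' hx).mul (hz₁' hx))).congr_deriv ?_
    ring
  obtain ⟨C, hC⟩ := hac.const_of_ae_hasDerivAt_zero hderiv
  rw [hC T right_mem_uIcc, hC 0 left_mem_uIcc]

end IsDiracSol

theorem mul_sub_mul_eq_zero_of_isCoprime {R : Type*} [CommRing R] {a b c d u v : R}
    (huv : IsCoprime u v) (hab : a * u - b * v = 0) (hcd : c * u - d * v = 0) :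
    a * d - b * c = 0 := by
  obtain ⟨r, s, hrs⟩ := huv
  linear_combination (r * d + s * c) * hab - (r * b + s * a) * hcd - (a * d - b * c) * hrs

theorem statement18_general {T : ℝ} (hT : 0 ≤ T) {p q : ℝ → ℂ}
    (hp : IntervalIntegrable p volume 0 T) (hq : IntervalIntegrable q volume 0 T)
    (U₁ U₂ : (ℝ → ℂ × ℂ) → ℂ) {lam₀ : ℂ} {X₁ X₂ : ℝ → ℂ × ℂ}
    (hX₁ : IsDiracSol p q T lam₀ X₁ ∧ X₁ 0 = (1, 0))
    (hX₂ : IsDiracSol p q T lam₀ X₂ ∧ X₂ 0 = (0, 1))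
    (hΔ₁ : U₁ X₁ * (X₂ T).1 - U₁ X₂ * (X₁ T).1 = 0)
    (hΔ₂ : U₂ X₁ * (X₂ T).1 - U₂ X₂ * (X₁ T).1 = 0) :
    U₁ X₁ * U₂ X₂ - U₁ X₂ * U₂ X₁ = 0 := by
  have hW : diracWronskian X₁ X₂ T = 1 := by
    rw [hX₁.1.diracWronskian_eq hT hp hq hX₂.1]
    simp [diracWronskian, hX₁.2, hX₂.2]
  have hcoprime : IsCoprime (X₂ T).1 (X₁ T).1 :=
    ⟨-(X₁ T).2, (X₂ T).2, by rw [← hW, diracWronskian]; ring⟩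
  exact mul_sub_mul_eq_zero_of_isCoprime hcoprime hΔ₁ hΔ₂

/-- **A common eigenvalue of `L₁` and `L₂` is an eigenvalue of `L₀`**: if
`Δ₁(λ₀) = 0` and `Δ₂(λ₀) = 0` then `ω(λ₀) = 0`. -/
theorem statement18
    (T : ℝ) (hT : 0 < T)
    (p q : ℝ → ℂ) (hp : AbsContOn p T) (hq : AbsContOn q T)
    (U₁ U₂ : NonlocalForm T)
    (lam₀ : ℂ)
    (X₁ X₂ : ℝ → ℂ × ℂ)
    (hX₁ : IsDiracSol p q T lam₀ X₁ ∧ X₁ 0 = (1, 0))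
    (hX₂ : IsDiracSol p q T lam₀ X₂ ∧ X₂ 0 = (0, 1))
    (hΔ₁ : U₁.app X₁ * (X₂ T).1 - U₁.app X₂ * (X₁ T).1 = 0)
    (hΔ₂ : U₂.app X₁ * (X₂ T).1 - U₂.app X₂ * (X₁ T).1 = 0) :
    U₁.app X₁ * U₂.app X₂ - U₁.app X₂ * U₂.app X₁ = 0 :=
  statement18_general hT.le (hp.intervalIntegrable hT.le) (hq.intervalIntegrable hT.le)
    U₁.app U₂.app hX₁ hX₂ hΔ₁ hΔ₂
end
end
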